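/- arXiv:2203.14648 — 2 statements merged into one kernel-verified Lean document; each statement's English description precedes it below -/
import Mathlib

section
/- Let d ≥ 2 be an integer, γ > 1 a real number, and c = γ − d − 1. Suppose the reals p, r, ν, κ satisfy: p > 1, r > 1, 1/r = 2/p + (2ν+κ)/d − 1, κ < d/r, ((d−1)/2)(1 − 2/p) < ν < d(p−1)/p, 2r ≥ p, max{ν,κ} > 0, ν + κ ≥ (d−1)(1/r − 1/p), max{0, d + p(c+ν)} < d(r−p)/r + p(ν+κ+1) < γ p (r−1)/r, and additionally γ p (r−1)/r − d(r−p)/r − p(ν+κ+1) > γ and p > r/(r−1). Then for every β ∈ (0,1) there exists A > 0 such that the convex set E_A = {ϑ ∈ RL^p_{u_ν} : ϑ admits a radial bounding function θ̂ ∈ L^p_{u_ν} with |ϑ| ≤ θ̂ a.e. and ‖θ̂‖_{u_ν,p} ≤ A} is invariant under R_β, i.e. R_β[E_A] ⊆ E_A. -/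
open MeasureTheory Set RealInnerProductSpace
open scoped ENNReal NNReal

noncomputable section

/-- `ℝ^d` with the Euclidean norm. -/
abbrev Ed (d : ℕ) := EuclideanSpace ℝ (Fin d)

/-- `ℂ^d` with the Euclidean norm. -/
abbrev EdC (d : ℕ) := EuclideanSpace ℂ (Fin d)

/-- A function on `ℝ^d` is radial if its value depends only on the norm of the argument. -/
def IsRadial {d : ℕ} {α : Type*} (f : Ed d → α) : Prop :=
  ∀ x y : Ed d, ‖x‖ = ‖y‖ → f x = f y

/-- The pairing `⟨η, v⟩` of a real vector with a complex vector, extended ℂ-bilinearly. -/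
def pairC {d : ℕ} (η : Ed d) (v : EdC d) : ℂ := ∑ i, (η i : ℂ) * v i

/-- The Leray projection `P_η v = v − (⟨v,η⟩/|η|²) η`, extended ℂ-bilinearly. -/
def lerayC {d : ℕ} (η : Ed d) (v : EdC d) : EdC d :=
  (WithLp.equiv 2 (Fin d → ℂ)).symm
    (fun i => v i - (pairC η v / ((‖η‖ ^ 2 : ℝ) : ℂ)) * (η i : ℂ))

/-- The integrand of the nonlinear part of the renormalization operator (complex fields). -/
def renormKernelC (d : ℕ) (γ : ℝ) (ϑ : Ed d → EdC d) (η : Ed d) (t : ℝ) (x : Ed d) : EdC d :=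
  (t ^ (-(γ - d - 1)) * Real.exp (‖η‖ ^ γ * (1 - t ^ γ))) •
    (pairC η (ϑ (t • η - x)) • lerayC η (ϑ x))

/-- Absolute convergence of the integrals defining `R_β[ϑ](η)` (complex fields). -/
def RenormDefinedC (d : ℕ) (γ β : ℝ) (ϑ : Ed d → EdC d) (η : Ed d) : Prop :=
  IntegrableOn (fun q : ℝ × Ed d => renormKernelC d γ ϑ η q.1 q.2)
    (Set.Ioc (1 : ℝ) β⁻¹ ×ˢ Set.univ)

/-- The renormalization operator `R_β` on complex vector fields. -/
def renormC (d : ℕ) (γ β : ℝ) (ϑ : Ed d → EdC d) (η : Ed d) : EdC d :=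
  (β ^ (γ - d - 1) * Real.exp (‖η‖ ^ γ * (1 - β ^ (-γ)))) • ϑ (β⁻¹ • η)
    + (Complex.I * (γ : ℂ)) •
        ∫ t in Set.Ioc (1 : ℝ) β⁻¹, ∫ x : Ed d, renormKernelC d γ ϑ η t x

/-- The Leray projection `P_η v = v − (⟨v,η⟩/|η|²) η` for real vector fields. -/
def lerayR {d : ℕ} (η v : Ed d) : Ed d := v - (⟪v, η⟫ / ‖η‖ ^ 2) • η

/-- The integrand of the nonlinear part of the renormalization operator (real fields). -/
def renormKernelR (d : ℕ) (γ : ℝ) (ψ : Ed d → Ed d) (η : Ed d) (t : ℝ) (x : Ed d) : Ed d :=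
  (t ^ (-(γ - d - 1)) * Real.exp (‖η‖ ^ γ * (1 - t ^ γ))) •
    (⟪η, ψ (t • η - x)⟫ • lerayR η (ψ x))

/-- Absolute convergence of the integrals defining `R_β[ψ](η)` (real fields). -/
def RenormDefinedR (d : ℕ) (γ β : ℝ) (ψ : Ed d → Ed d) (η : Ed d) : Prop :=
  IntegrableOn (fun q : ℝ × Ed d => renormKernelR d γ ψ η q.1 q.2)
    (Set.Ioc (1 : ℝ) β⁻¹ ×ˢ Set.univ)

/-- The renormalization operator `R_β` on real vector fields. -/
def renormR (d : ℕ) (γ β : ℝ) (ψ : Ed d → Ed d) (η : Ed d) : Ed d :=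
  (β ^ (γ - d - 1) * Real.exp (‖η‖ ^ γ * (1 - β ^ (-γ)))) • ψ (β⁻¹ • η)
    - γ • ∫ t in Set.Ioc (1 : ℝ) β⁻¹, ∫ x : Ed d, renormKernelR d γ ψ η t x

/-- First coordinate (`x_{d-1}`) of the projection onto the azimuthal plane. -/
def azim1 {d : ℕ} (x : Ed d) : ℝ := if h : d - 2 < d then x ⟨d - 2, h⟩ else 0

/-- Second coordinate (`x_d`) of the projection onto the azimuthal plane. -/
def azim2 {d : ℕ} (x : Ed d) : ℝ := if h : d - 1 < d then x ⟨d - 1, h⟩ else 0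

/-- The norm `|x_a|` of the azimuthal projection. -/
def normA {d : ℕ} (x : Ed d) : ℝ := Real.sqrt (azim1 x ^ 2 + azim2 x ^ 2)

/-- `cos∠_η(x) = ⟨x_a, η_a⟩ / (|x_a| |η_a|)`. -/
def cosAng {d : ℕ} (η x : Ed d) : ℝ :=
  (azim1 x * azim1 η + azim2 x * azim2 η) / (normA x * normA η)

/-- `sin∠_η(x) = (η_{d−1} x_d − η_d x_{d−1}) / (|x_a| |η_a|)`. -/
def sinAng {d : ℕ} (η x : Ed d) : ℝ :=
  (azim1 η * azim2 x - azim2 η * azim1 x) / (normA x * normA η)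

/-- The integrand of the nonlinear part of the azimuthal renormalization operator. -/
def aKernel (d : ℕ) (γ : ℝ) (ψ : Ed d → ℝ) (η : Ed d) (t : ℝ) (x : Ed d) : ℝ :=
  t ^ (-(γ - d - 1)) * Real.exp (‖η‖ ^ γ * (1 - t ^ γ)) *
    (ψ x * ψ (t • η - x) * cosAng η x * sinAng η (t • η - x))

/-- Absolute convergence of the integrals defining the azimuthal `R_β[ψ](η)`. -/
def ARenormDefined (d : ℕ) (γ β : ℝ) (ψ : Ed d → ℝ) (η : Ed d) : Prop :=
  IntegrableOn (fun q : ℝ × Ed d => aKernel d γ ψ η q.1 q.2)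
    (Set.Ioc (1 : ℝ) β⁻¹ ×ˢ Set.univ)

/-- The azimuthal renormalization operator `R_β` on scalar functions. -/
def arenorm (d : ℕ) (γ β : ℝ) (ψ : Ed d → ℝ) (η : Ed d) : ℝ :=
  β ^ (γ - d - 1) * Real.exp (‖η‖ ^ γ * (1 - β ^ (-γ))) * ψ (β⁻¹ • η)
    + γ * normA η * ∫ t in Set.Ioc (1 : ℝ) β⁻¹, ∫ x : Ed d, aKernel d γ ψ η t x

/-- Weighted `L^p` norm `(∫ |f|^p w^p)^{1/p}` of a scalar function, valued in `ℝ≥0∞`. -/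
def wLpNorm {d : ℕ} (w : Ed d → ℝ) (p : ℝ) (f : Ed d → ℝ) : ℝ≥0∞ :=
  (∫⁻ x : Ed d, ENNReal.ofReal (|f x| ^ p * w x ^ p)) ^ (1 / p)

/-- Weighted `L^p` norm of a `ℂ^d`-valued function, valued in `ℝ≥0∞`. -/
def wLpNormC {d : ℕ} (w : Ed d → ℝ) (p : ℝ) (f : Ed d → EdC d) : ℝ≥0∞ :=
  (∫⁻ x : Ed d, ENNReal.ofReal (‖f x‖ ^ p * w x ^ p)) ^ (1 / p)

/-- The weight `u_ν(x) = e^{|x|} |x|^ν`. -/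
def uWeight (ν : ℝ) {d : ℕ} (x : Ed d) : ℝ := Real.exp ‖x‖ * ‖x‖ ^ ν

/-- The weight `v_ν(x) = e^{(b/2)|x|} |x|^ν`. -/
def vWeight (b ν : ℝ) {d : ℕ} (x : Ed d) : ℝ := Real.exp (b / 2 * ‖x‖) * ‖x‖ ^ ν

/-- Membership in `RL^p_{u_ν}`: fields dominated a.e. by a radial function in `L^p_{u_ν}`. -/
def MemRL (d : ℕ) (p ν : ℝ) (ϑ : Ed d → EdC d) : Prop :=
  AEStronglyMeasurable ϑ volume ∧ ∃ g : Ed d → ℝ, Measurable g ∧ IsRadial g ∧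
    wLpNorm (uWeight ν) p g < ⊤ ∧ ∀ᵐ x : Ed d, ‖ϑ x‖ ≤ g x

/-- Membership in `RL^p_{u_ν}` with a radial bound of norm at most `A`. -/
def MemRLBall (d : ℕ) (p ν A : ℝ) (ϑ : Ed d → EdC d) : Prop :=
  AEStronglyMeasurable ϑ volume ∧ ∃ g : Ed d → ℝ, Measurable g ∧ IsRadial g ∧
    wLpNorm (uWeight ν) p g ≤ ENNReal.ofReal A ∧ ∀ᵐ x : Ed d, ‖ϑ x‖ ≤ g x

/-- Membership in the set `M` of functions bounded by `k |η|^σ e^{−b|η|}`. -/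
def memM {d : ℕ} (k b σ : ℝ) (ψ : Ed d → ℝ) : Prop :=
  Measurable ψ ∧
    ∀ᵐ η : Ed d, η ≠ 0 → |ψ η| < k * ‖η‖ ^ σ * Real.exp (-b * ‖η‖)

/-- Inclusion of a real vector into `ℂ^d`. -/
def toC {d : ℕ} (v : Ed d) : EdC d :=
  (WithLp.equiv 2 (Fin d → ℂ)).symm (fun i => (v i : ℂ))

/-- The azimuthal unit vector field `e_{d−1}(y) = (0,…,0,−y_d,y_{d−1})/|y_a|`. -/
def azVec (d : ℕ) (y : Ed d) : Ed d :=
  (WithLp.equiv 2 (Fin d → ℝ)).symm (fun i =>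
    if (i : ℕ) = d - 2 then -azim2 y / normA y
    else if (i : ℕ) = d - 1 then azim1 y / normA y
    else 0)

/-- The Leray self-similar ansatz
`v_*(y,t) = i (T−t)^{(d+1−γ)/γ} ψ(y (T−t)^{1/γ}) e_{d−1}(y)`. -/
def vfun (d : ℕ) (γ : ℝ) (ψ : Ed d → ℝ) (T : ℝ) (y : Ed d) (t : ℝ) : EdC d :=
  (Complex.I *
      ((((T - t) ^ (((d : ℝ) + 1 - γ) / γ) * ψ (((T - t) ^ (1 / γ)) • y)) : ℝ) : ℂ)) •
    toC (azVec d y)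

end


lemma lint_pow_le {α : Type*} [MeasurableSpace α] (μ : Measure α) {f : α → ℝ≥0∞}
    (hf : AEMeasurable f μ) {p : ℝ} (hp : 1 < p) :
    (∫⁻ x, f x ∂μ) ^ p ≤ μ univ ^ (p - 1) * ∫⁻ x, f x ^ p ∂μ := by
  have hpq : p.HolderConjugate (p / (p - 1)) := Real.HolderConjugate.conjExponent hp
  have h := ENNReal.lintegral_mul_le_Lp_mul_Lq μ hpq hf (aemeasurable_const (b := (1 : ℝ≥0∞)))
  simp only [Pi.mul_apply, mul_one, ENNReal.one_rpow, lintegral_const, one_mul] at h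
  calc (∫⁻ x, f x ∂μ) ^ p ≤ ((∫⁻ x, f x ^ p ∂μ) ^ (1 / p) * μ univ ^ (1 / (p / (p - 1)))) ^ p :=
        ENNReal.rpow_le_rpow h (by linarith)
    _ = _ := by
        rw [ENNReal.mul_rpow_of_nonneg _ _ (by linarith), ← ENNReal.rpow_mul, ← ENNReal.rpow_mul,
          mul_comm]
        have : (1 / p) * p = 1 := by field_simp
        rw [this, ENNReal.rpow_one]
        congr 2
        have : p - 1 ≠ 0 := by linarith
        field_simp

lemma lint_smul {d : ℕ} (f : Ed d → ℝ≥0∞) (hf : Measurable f) {c : ℝ} (hc : 0 < c) :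
    ∫⁻ x, f (c • x) = ENNReal.ofReal c ^ (-(d : ℝ)) * ∫⁻ x, f x := by
  have h := Measure.map_addHaar_smul (volume : Measure (Ed d)) hc.ne'
  rw [← lintegral_map hf (by fun_prop : Measurable fun x : Ed d => c • x)]
  rw [h, lintegral_smul_measure, smul_eq_mul]
  congr 1
  rw [ENNReal.ofReal_rpow_of_pos hc, abs_of_pos (by positivity), Real.rpow_neg hc.le]
  simp

lemma enorm_rpow_real {d : ℕ} {x : Ed d} (hx : x ≠ 0) (a : ℝ) :
    ‖x‖ₑ ^ a = ENNReal.ofReal (‖x‖ ^ a) := by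
  rw [← ofReal_norm, ENNReal.ofReal_rpow_of_pos (norm_pos_iff.2 hx)]

lemma ae_ne_zero {d : ℕ} (hd : 2 ≤ d) : ∀ᵐ x : Ed d, x ≠ 0 := by
  have : Nontrivial (Ed d) := by
    have : Nonempty (Fin d) := ⟨⟨0, by omega⟩⟩
    infer_instance
  have : (volume : Measure (Ed d)) {0} = 0 := measure_singleton _
  rw [ae_iff]; simp

lemma lint_ball_one {d : ℕ} (hd : 2 ≤ d) {a : ℝ} (ha : -(d : ℝ) < a) :
    ∫⁻ x in Metric.ball (0 : Ed d) 1, ‖x‖ₑ ^ a ≠ ⊤ := by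
  have : Nontrivial (Ed d) := by
    have : Nonempty (Fin d) := ⟨⟨0, by omega⟩⟩
    infer_instance
  have hi : IntegrableOn (fun x : Ed d => ‖x‖ ^ a) (Metric.ball 0 1) := by
    rw [integrableOn_fun_norm_addHaar (volume : Measure (Ed d)) (f := fun y => y ^ a)]
    have : IntegrableOn (fun y : ℝ => y ^ (d - 1 + a)) (Ioo 0 1) := by
      rw [← integrableOn_Ioc_iff_integrableOn_Ioo]
      exact ((intervalIntegrable_iff_integrableOn_Ioc_of_le zero_le_one).1
        (intervalIntegral.intervalIntegrable_rpow' (by linarith)))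
    refine this.congr_fun (fun y hy => ?_) measurableSet_Ioo
    simp only [finrank_euclideanSpace, Fintype.card_fin, smul_eq_mul]
    rw [Real.rpow_add hy.1, ← Real.rpow_natCast, Nat.cast_sub (by omega)]
    simp
  have := hi.2
  rw [hasFiniteIntegral_iff_enorm] at this
  refine (lt_of_le_of_lt (lintegral_mono_ae ?_) this).ne
  filter_upwards [ae_restrict_of_ae (ae_ne_zero hd)] with x hx
  rw [enorm_rpow_real hx, Real.enorm_eq_ofReal (by positivity)]

lemma lint_compl_one {d : ℕ} (hd : 2 ≤ d) {a : ℝ} (ha : a < -(d : ℝ)) :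
    ∫⁻ x in (Metric.ball (0 : Ed d) 1)ᶜ, ‖x‖ₑ ^ a ≠ ⊤ := by
  have : Nontrivial (Ed d) := by
    have : Nonempty (Fin d) := ⟨⟨0, by omega⟩⟩
    infer_instance
  have hi : Integrable (fun x : Ed d => (Ici (1:ℝ)).indicator (fun y => y ^ a) ‖x‖) := by
    rw [integrable_fun_norm_addHaar (volume : Measure (Ed d)) (f := (Ici (1:ℝ)).indicator (fun y => y ^ a))]
    have : IntegrableOn (fun y : ℝ => y ^ (d - 1 + a)) (Ici 1) := by
      rw [integrableOn_Ici_iff_integrableOn_Ioi]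
      exact integrableOn_Ioi_rpow_of_lt (by linarith) one_pos
    rw [← integrable_indicator_iff measurableSet_Ici] at this
    refine this.integrableOn.congr_fun (fun y hy => ?_) measurableSet_Ioi
    by_cases h : y ∈ Ici (1:ℝ)
    · have hy : 0 < y := hy
      simp only [h, indicator_of_mem, finrank_euclideanSpace, Fintype.card_fin, smul_eq_mul]
      rw [Real.rpow_add hy, ← Real.rpow_natCast, Nat.cast_sub (by omega)]
      simp
    · simp [h]
  have := hi.2
  rw [hasFiniteIntegral_iff_enorm] at this
  refine (lt_of_le_of_lt ?_ this).ne
  rw [← lintegral_indicator measurableSet_ball.compl]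
  refine lintegral_mono_ae ?_
  filter_upwards [ae_ne_zero hd] with x hx
  by_cases h : 1 ≤ ‖x‖
  · rw [indicator_of_mem (by simpa using h), indicator_of_mem (by simpa using h),
      enorm_rpow_real hx, Real.enorm_eq_ofReal (by positivity)]
  · rw [indicator_of_notMem (by simpa using h)]; simp

lemma enorm_smul_rpow {d : ℕ} (x : Ed d) {R : ℝ} (hR : 0 < R) (a : ℝ) :
    ‖R • x‖ₑ ^ a = ENNReal.ofReal R ^ a * ‖x‖ₑ ^ a := by
  rw [enorm_smul, Real.enorm_eq_ofReal hR.le]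
  exact ENNReal.mul_rpow_of_ne_top ENNReal.ofReal_ne_top enorm_ne_top a

lemma lint_scale {d : ℕ} (S : ℝ → Set (Ed d)) (hS : ∀ R, MeasurableSet (S R))
    (hsc : ∀ R, 0 < R → ∀ x, R • x ∈ S R ↔ x ∈ S 1) (a : ℝ) {R : ℝ} (hR : 0 < R) :
    ∫⁻ x in S R, ‖x‖ₑ ^ a = (∫⁻ x in S 1, ‖x‖ₑ ^ a) * ENNReal.ofReal R ^ (a + d) := by
  have hm : ∀ R, Measurable ((S R).indicator fun x : Ed d => ‖x‖ₑ ^ a) := fun R =>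
    (measurable_enorm.pow_const a).indicator (hS R)
  have h := lint_smul _ (hm R) hR
  have h2 : ∀ x : Ed d, (S R).indicator (fun x : Ed d => ‖x‖ₑ ^ a) (R • x)
      = ENNReal.ofReal R ^ a * (S 1).indicator (fun x : Ed d => ‖x‖ₑ ^ a) x := by
    intro x
    by_cases hx : x ∈ S 1
    · rw [indicator_of_mem hx, indicator_of_mem ((hsc R hR x).2 hx), enorm_smul_rpow x hR]
    · rw [indicator_of_notMem hx, indicator_of_notMem (fun h => hx ((hsc R hR x).1 h)), mul_zero]
  simp_rw [h2] at h
  rw [lintegral_const_mul _ (hm 1), lintegral_indicator (hS 1), lintegral_indicator (hS R)] at h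
  have hR0 : ENNReal.ofReal R ≠ 0 := by simpa using hR
  have h3 : ENNReal.ofReal R ^ (d:ℝ) * ENNReal.ofReal R ^ (-(d:ℝ)) = 1 := by
    rw [← ENNReal.rpow_add _ _ hR0 ENNReal.ofReal_ne_top]; simp
  calc _ = ENNReal.ofReal R ^ (d:ℝ) * (ENNReal.ofReal R ^ (-(d:ℝ)) * ∫⁻ x in S R, ‖x‖ₑ ^ a) := by
        rw [← mul_assoc, h3, one_mul]
    _ = _ := by rw [← h, ENNReal.rpow_add _ _ hR0 ENNReal.ofReal_ne_top]; ring

lemma lint_ball {d : ℕ} (a : ℝ) {R : ℝ} (hR : 0 < R) :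
    ∫⁻ x in Metric.ball (0 : Ed d) R, ‖x‖ₑ ^ a =
      (∫⁻ x in Metric.ball (0 : Ed d) 1, ‖x‖ₑ ^ a) * ENNReal.ofReal R ^ (a + d) :=
  lint_scale (fun R => Metric.ball (0 : Ed d) R) (fun _ => measurableSet_ball)
    (fun R hR x => by simp [norm_smul, abs_of_pos hR, mul_lt_iff_lt_one_right hR]) a hR

lemma lint_compl {d : ℕ} (a : ℝ) {R : ℝ} (hR : 0 < R) :
    ∫⁻ x in (Metric.ball (0 : Ed d) R)ᶜ, ‖x‖ₑ ^ a =
      (∫⁻ x in (Metric.ball (0 : Ed d) 1)ᶜ, ‖x‖ₑ ^ a) * ENNReal.ofReal R ^ (a + d) :=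
  lint_scale (fun R => (Metric.ball (0 : Ed d) R)ᶜ) (fun _ => measurableSet_ball.compl)
    (fun R hR x => by simp [norm_smul, abs_of_pos hR, le_mul_iff_one_le_right hR]) a hR

/-- the weighted energy -/
noncomputable def Nrg {d : ℕ} (p ν : ℝ) (φ : Ed d → ℝ≥0∞) : ℝ≥0∞ :=
  ∫⁻ x, (φ x * ‖x‖ₑ ^ ν) ^ p

lemma split_w {d : ℕ} {x : Ed d} (hx : x ≠ 0) (a : ℝ≥0∞) (ν : ℝ) :
    a = (a * ‖x‖ₑ ^ ν) * ‖x‖ₑ ^ (-ν) := by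
  rw [mul_assoc, ← ENNReal.rpow_add _ _ (by simpa using hx) enorm_ne_top]; simp

lemma C1 {d : ℕ} (hd : 2 ≤ d) {p ν : ℝ} (hp : 1 < p) (hs : d / p + ν < d) :
    ∃ C : ℝ≥0∞, C ≠ ⊤ ∧ ∀ φ : Ed d → ℝ≥0∞, Measurable φ → ∀ R : ℝ, 0 < R →
      ∫⁻ y in Metric.ball 0 R, φ y ≤ C * Nrg p ν φ ^ (1 / p) *
        ENNReal.ofReal R ^ (d - (d / p + ν)) := by
  set q := p / (p - 1) with hq
  have hp1 : 0 < p - 1 := by linarith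
  have hpq : p.HolderConjugate q := Real.HolderConjugate.conjExponent hp
  have hq0 : 0 < q := by positivity
  have ha : -(d:ℝ) < -ν * q := by
    rw [hq, ← sub_pos]
    have : -ν * (p / (p - 1)) - -(d:ℝ) = (d - (d / p + ν)) * (p / (p-1)) := by field_simp; ring
    rw [this]; have : 0 < d - (d / p + ν) := by linarith
    positivity
  refine ⟨(∫⁻ x in Metric.ball (0 : Ed d) 1, ‖x‖ₑ ^ (-ν * q)) ^ (1 / q),
    ENNReal.rpow_ne_top_of_nonneg (by positivity) (lint_ball_one hd ha), fun φ hφ R hR => ?_⟩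
  calc ∫⁻ y in Metric.ball 0 R, φ y
      = ∫⁻ y in Metric.ball (0 : Ed d) R, ((fun y : Ed d => φ y * ‖y‖ₑ ^ ν) * (fun y : Ed d => ‖y‖ₑ ^ (-ν))) y := by
        refine lintegral_congr_ae ?_
        filter_upwards [ae_restrict_of_ae (ae_ne_zero hd)] with x hx
        exact split_w hx _ _
    _ ≤ (∫⁻ y in Metric.ball 0 R, (φ y * ‖y‖ₑ ^ ν) ^ p) ^ (1 / p) *
        (∫⁻ y in Metric.ball (0 : Ed d) R, (‖y‖ₑ ^ (-ν)) ^ q) ^ (1 / q) :=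
        ENNReal.lintegral_mul_le_Lp_mul_Lq _ hpq (by fun_prop) (by fun_prop)
    _ ≤ Nrg p ν φ ^ (1 / p) * ((∫⁻ x in Metric.ball (0 : Ed d) 1, ‖x‖ₑ ^ (-ν * q)) *
          ENNReal.ofReal R ^ (-ν * q + d)) ^ (1 / q) := by
        gcongr
        · exact setLIntegral_le_lintegral _ _
        · simp_rw [← ENNReal.rpow_mul]; exact (lint_ball _ hR).le
    _ = _ := by
        rw [ENNReal.mul_rpow_of_nonneg _ _ (by positivity), ← ENNReal.rpow_mul]
        have : (-ν * q + d) * (1 / q) = d - (d / p + ν) := by rw [hq]; field_simp; ring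
        rw [this]; ring

lemma C1' {d : ℕ} (hd : 2 ≤ d) {p ν : ℝ} (hp : 2 < p) (hs : (d:ℝ) < 2 * (d / p + ν)) :
    ∃ C : ℝ≥0∞, C ≠ ⊤ ∧ ∀ φ : Ed d → ℝ≥0∞, Measurable φ → ∀ R : ℝ, 0 < R →
      ∫⁻ y in (Metric.ball 0 R)ᶜ, φ y ^ (2:ℝ) ≤ C * Nrg p ν φ ^ (2 / p) *
        ENNReal.ofReal R ^ (d - 2 * (d / p + ν)) := by
  set p' := p / 2 with hp'
  set q := p' / (p' - 1) with hq
  have hp2 : 1 < p' := by rw [hp']; linarith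
  have hp1 : 0 < p' - 1 := by linarith
  have hpq : p'.HolderConjugate q := Real.HolderConjugate.conjExponent hp2
  have hq0 : 0 < q := by positivity
  have hpp : p = 2 * p' := by rw [hp']; ring
  have ha : (-2 * ν) * q < -(d:ℝ) := by
    rw [hq, ← sub_pos]
    have : -(d:ℝ) - (-2 * ν) * (p' / (p' - 1)) = (2 * (d / p + ν) - d) * (p' / (p'-1)) := by
      rw [hpp]; field_simp; ring
    rw [this]; have : 0 < 2 * (d / p + ν) - d := by linarith
    positivity
  refine ⟨(∫⁻ x in (Metric.ball (0 : Ed d) 1)ᶜ, ‖x‖ₑ ^ ((-2 * ν) * q)) ^ (1 / q),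
    ENNReal.rpow_ne_top_of_nonneg (by positivity) (lint_compl_one hd ha), fun φ hφ R hR => ?_⟩
  calc ∫⁻ y in (Metric.ball 0 R)ᶜ, φ y ^ (2:ℝ)
      = ∫⁻ y in (Metric.ball (0 : Ed d) R)ᶜ, ((fun y : Ed d => (φ y * ‖y‖ₑ ^ ν) ^ (2:ℝ)) *
          (fun y : Ed d => ‖y‖ₑ ^ (-2 * ν))) y := by
        refine lintegral_congr_ae ?_
        filter_upwards [ae_restrict_of_ae (ae_ne_zero hd)] with x hx
        conv_lhs => rw [split_w hx (φ x) ν, ENNReal.mul_rpow_of_nonneg _ _ (by norm_num),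
          ← ENNReal.rpow_mul]
        simp only [Pi.mul_apply]
        congr 2; ring
    _ ≤ (∫⁻ y in (Metric.ball 0 R)ᶜ, ((φ y * ‖y‖ₑ ^ ν) ^ (2:ℝ)) ^ p') ^ (1 / p') *
        (∫⁻ y in (Metric.ball (0 : Ed d) R)ᶜ, (‖y‖ₑ ^ (-2 * ν)) ^ q) ^ (1 / q) :=
        ENNReal.lintegral_mul_le_Lp_mul_Lq _ hpq (by fun_prop) (by fun_prop)
    _ ≤ Nrg p ν φ ^ (1 / p') * ((∫⁻ x in (Metric.ball (0 : Ed d) 1)ᶜ, ‖x‖ₑ ^ ((-2 * ν) * q)) *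
          ENNReal.ofReal R ^ ((-2 * ν) * q + d)) ^ (1 / q) := by
        simp_rw [← ENNReal.rpow_mul, ← hpp]
        gcongr
        · exact setLIntegral_le_lintegral _ _
        · exact (lint_compl _ hR).le
    _ = _ := by
        rw [ENNReal.mul_rpow_of_nonneg _ _ (by positivity), ← ENNReal.rpow_mul]
        have : ((-2 * ν) * q + d) * (1 / q) = d - 2 * (d / p + ν) := by
          rw [hq, hpp]; field_simp; ring
        have h2 : 1 / p' = 2 / p := by rw [hpp]; field_simp
        rw [this, h2]; ring


/-- self-convolution -/
noncomputable def cnv {d : ℕ} (φ : Ed d → ℝ≥0∞) (x : Ed d) : ℝ≥0∞ := ∫⁻ y, φ y * φ (x - y)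

/-- near part of the self-convolution -/
noncomputable def Fi {d : ℕ} (φ : Ed d → ℝ≥0∞) (x : Ed d) : ℝ≥0∞ :=
  ∫⁻ y, if ‖y‖ < ‖x‖ / 2 then φ y * φ (x - y) else 0

/-- far part -/
noncomputable def Dfar {d : ℕ} (φ : Ed d → ℝ≥0∞) (x : Ed d) : ℝ≥0∞ :=
  ∫⁻ y, if ‖y‖ < ‖x‖ / 2 then 0 else φ y ^ (2:ℝ)

lemma cnv_meas {d : ℕ} {φ : Ed d → ℝ≥0∞} (h : Measurable φ) : Measurable (cnv φ) := by
  unfold cnv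
  exact Measurable.lintegral_prod_right' (f := fun q : Ed d × Ed d => φ q.2 * φ (q.1 - q.2))
    (by fun_prop)

lemma msb {d : ℕ} : MeasurableSet {q : Ed d × Ed d | ‖q.2‖ < ‖q.1‖ / 2} :=
  measurableSet_lt (by fun_prop) (by fun_prop)

lemma Fi_meas {d : ℕ} {φ : Ed d → ℝ≥0∞} (h : Measurable φ) : Measurable (Fi φ) := by
  unfold Fi
  exact Measurable.lintegral_prod_right'
    (f := fun q : Ed d × Ed d => if ‖q.2‖ < ‖q.1‖ / 2 then φ q.2 * φ (q.1 - q.2) else 0)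
    (Measurable.ite msb (by fun_prop) (by fun_prop))

lemma Dfar_meas {d : ℕ} {φ : Ed d → ℝ≥0∞} (h : Measurable φ) : Measurable (Dfar φ) := by
  unfold Dfar
  exact Measurable.lintegral_prod_right'
    (f := fun q : Ed d × Ed d => if ‖q.2‖ < ‖q.1‖ / 2 then 0 else φ q.2 ^ (2:ℝ))
    (Measurable.ite msb (by fun_prop) (by fun_prop))

lemma mul_le_sq_add (a b : ℝ≥0∞) : a * b ≤ a ^ (2:ℝ) + b ^ (2:ℝ) := by
  simp only [ENNReal.rpow_two]
  rcases le_total a b with h | h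
  · calc a * b ≤ b * b := by gcongr
      _ ≤ _ := by rw [sq b]; exact le_add_self
  · calc a * b ≤ a * a := by gcongr
      _ ≤ _ := by rw [sq a]; exact le_self_add

lemma cnv_le {d : ℕ} {φ : Ed d → ℝ≥0∞} (h : Measurable φ) (x : Ed d) :
    cnv φ x ≤ 2 * (Fi φ x + Dfar φ x) := by
  set k1 : Ed d → ℝ≥0∞ := fun y => if ‖y‖ < ‖x‖ / 2 then φ y * φ (x - y) else 0
  set k2 : Ed d → ℝ≥0∞ := fun y => if ‖y‖ < ‖x‖ / 2 then 0 else φ y ^ (2:ℝ)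
  have ms : MeasurableSet {y : Ed d | ‖y‖ < ‖x‖ / 2} := measurableSet_lt (by fun_prop) (by fun_prop)
  have m1 : Measurable k1 := Measurable.ite ms (by fun_prop) (by fun_prop)
  have m2 : Measurable k2 := Measurable.ite ms (by fun_prop) (by fun_prop)
  have m12 : Measurable fun y => k1 y + k2 y := m1.add m2
  have e : Fi φ x + Dfar φ x = ∫⁻ y, (k1 y + k2 y) := (lintegral_add_left m1 _).symm
  have e2 : ∫⁻ y, (k1 (x - y) + k2 (x - y)) = ∫⁻ y, (k1 y + k2 y) :=
    lintegral_sub_left_eq_self (fun y => k1 y + k2 y) x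
  rw [e, two_mul]
  nth_rewrite 2 [← e2]
  rw [← lintegral_add_left m12]
  refine lintegral_mono fun y => ?_
  simp only [k1, k2, sub_sub_cancel]
  by_cases ha : ‖y‖ < ‖x‖ / 2
  · simp only [ha, if_true, add_zero]; exact le_self_add
  · by_cases hb : ‖x - y‖ < ‖x‖ / 2
    · simp only [hb, if_true, add_zero]; rw [mul_comm]; exact le_add_self
    · simp only [ha, hb, if_false, zero_add]; exact mul_le_sq_add _ _

lemma rpow_comp {x z : ℝ≥0∞} (h1 : x ≤ 2 * z) (h2 : z ≤ 2 * x) (a : ℝ) :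
    x ^ a ≤ 2 ^ |a| * z ^ a := by
  rcases le_total 0 a with h | h
  · rw [abs_of_nonneg h, ← ENNReal.mul_rpow_of_nonneg _ _ h]
    exact ENNReal.rpow_le_rpow h1 h
  · rw [abs_of_nonpos h]
    have h3 : (2 * x) ^ a ≤ z ^ a := by
      have := ENNReal.rpow_le_rpow (z := -a) h2 (by linarith)
      rwa [ENNReal.rpow_neg, ENNReal.rpow_neg, ENNReal.inv_le_inv] at this
    have h5 : (2 : ℝ≥0∞) ^ (-a) * 2 ^ a = 1 := by
      rw [← ENNReal.rpow_add _ _ (by simp) (by simp)]; simp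
    by_cases hx0 : x = 0
    · have : z = 0 := by simpa [hx0] using h2
      rw [this, hx0]
      have : (1 : ℝ≥0∞) ≤ 2 ^ (-a) := by simpa using ENNReal.rpow_le_rpow (z := -a) (one_le_two : (1:ℝ≥0∞) ≤ 2) (by linarith)
      calc (0:ℝ≥0∞) ^ a = 1 * 0 ^ a := by rw [one_mul]
        _ ≤ _ := by gcongr
    have h4 : (2 * x) ^ a = 2 ^ a * x ^ a := ENNReal.mul_rpow_of_ne_zero (by simp) hx0 a
    calc x ^ a = 2 ^ (-a) * (2 * x) ^ a := by rw [h4, ← mul_assoc, h5, one_mul]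
      _ ≤ _ := by gcongr

lemma ofReal_le_two {a b : ℝ} (h : a ≤ 2 * b) : ENNReal.ofReal a ≤ 2 * ENNReal.ofReal b := by
  have : (2 : ℝ≥0∞) * ENNReal.ofReal b = ENNReal.ofReal (2 * b) := by
    rw [ENNReal.ofReal_mul (by norm_num)]; simp
  rw [this]; exact ENNReal.ofReal_le_ofReal h

lemma C2 {d : ℕ} (hd : 2 ≤ d) {p ν : ℝ} (hp : 1 < p) (hs : d / p + ν < d) :
    ∃ C : ℝ≥0∞, C ≠ ⊤ ∧ ∀ φ : Ed d → ℝ≥0∞, Measurable φ →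
      ∫⁻ x, (Fi φ x * ‖x‖ₑ ^ (ν - (d - (d / p + ν)))) ^ p ≤ C * Nrg p ν φ ^ (2:ℝ) := by
  obtain ⟨C, hC, hC1⟩ := C1 hd hp hs
  set σ : ℝ := d - (d / p + ν) with hσ
  have hσ0 : 0 < σ := by rw [hσ]; linarith
  set e : ℝ := ν * p - σ with he
  have hp0 : 0 < p := by linarith
  have hp1 : 0 ≤ p - 1 := by linarith
  refine ⟨2 ^ |e| * C ^ p, ENNReal.mul_ne_top (ENNReal.rpow_ne_top_of_nonneg (abs_nonneg _) (by simp))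
    (ENNReal.rpow_ne_top_of_nonneg hp0.le hC), fun φ hφ => ?_⟩
  set N := Nrg p ν φ with hN
  set M := C * N ^ (1 / p) with hM
  have hball : ∀ x : Ed d, x ≠ 0 → ∫⁻ y in Metric.ball (0 : Ed d) ‖x‖, φ y ≤ M * ‖x‖ₑ ^ σ := by
    intro x hx
    have := hC1 φ hφ ‖x‖ (norm_pos_iff.2 hx)
    rwa [ofReal_norm] at this
  set hh : Ed d → ℝ≥0∞ := fun z => φ z ^ p * ‖z‖ₑ ^ e with hhh
  have mh : Measurable hh := by fun_prop
  -- pointwise bound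
  have key : ∀ x : Ed d, x ≠ 0 → (Fi φ x * ‖x‖ₑ ^ (ν - σ)) ^ p ≤
      (M ^ (p - 1) * 2 ^ |e|) * ∫⁻ y, if ‖y‖ < ‖x - y‖ then φ y * hh (x - y) else 0 := by
    intro x hx
    have hx0 : ‖x‖ₑ ≠ 0 := by simpa using hx
    set B := Metric.ball (0 : Ed d) (‖x‖ / 2) with hB
    have hFi : Fi φ x = ∫⁻ y, φ (x - y) ∂((volume.restrict B).withDensity φ) := by
      rw [lintegral_withDensity_eq_lintegral_mul _ hφ (by fun_prop),
        ← lintegral_indicator measurableSet_ball]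
      unfold Fi
      refine lintegral_congr fun y => ?_
      by_cases h : ‖y‖ < ‖x‖ / 2
      · rw [indicator_of_mem (by simpa [hB] using h)]; simp [h]
      · rw [indicator_of_notMem (by simpa [hB] using h)]; simp [h]
    have hu : ((volume.restrict B).withDensity φ) univ ≤ M * ‖x‖ₑ ^ σ := by
      rw [withDensity_apply _ MeasurableSet.univ, Measure.restrict_univ]
      refine le_trans (lintegral_mono_set ?_) (hball x hx)
      exact Metric.ball_subset_ball (by linarith [norm_nonneg x])
    have hJ : Fi φ x ^ p ≤ (M * ‖x‖ₑ ^ σ) ^ (p - 1) * ∫⁻ y in B, φ y * φ (x - y) ^ p := by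
      rw [hFi]
      refine (lint_pow_le _ (by fun_prop) hp).trans ?_
      rw [lintegral_withDensity_eq_lintegral_mul _ hφ (by fun_prop)]
      gcongr
      simp
    calc (Fi φ x * ‖x‖ₑ ^ (ν - σ)) ^ p = Fi φ x ^ p * ‖x‖ₑ ^ ((ν - σ) * p) := by
          rw [ENNReal.mul_rpow_of_nonneg _ _ hp0.le, ← ENNReal.rpow_mul]
      _ ≤ ((M * ‖x‖ₑ ^ σ) ^ (p - 1) * ∫⁻ y in B, φ y * φ (x - y) ^ p) * ‖x‖ₑ ^ ((ν - σ) * p) := by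
          gcongr
      _ = M ^ (p - 1) * (‖x‖ₑ ^ e * ∫⁻ y in B, φ y * φ (x - y) ^ p) := by
          rw [ENNReal.mul_rpow_of_nonneg _ _ hp1, ← ENNReal.rpow_mul]
          have : ‖x‖ₑ ^ e = ‖x‖ₑ ^ (σ * (p - 1)) * ‖x‖ₑ ^ ((ν - σ) * p) := by
            rw [← ENNReal.rpow_add _ _ hx0 enorm_ne_top]; congr 1; rw [he]; ring
          rw [this]; ring
      _ ≤ M ^ (p - 1) * (2 ^ |e| * ∫⁻ y, if ‖y‖ < ‖x - y‖ then φ y * hh (x - y) else 0) := by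
          refine mul_le_mul' le_rfl ?_
          rw [← lintegral_const_mul' _ _ (ENNReal.rpow_ne_top_of_ne_zero hx0 enorm_ne_top),
            ← lintegral_const_mul' _ _ (ENNReal.rpow_ne_top_of_nonneg (abs_nonneg _) (by simp)),
            ← lintegral_indicator measurableSet_ball]
          refine lintegral_mono fun y => ?_
          by_cases h : ‖y‖ < ‖x‖ / 2
          · rw [indicator_of_mem (by simpa [hB] using h)]
            have t1 : ‖x‖ ≤ ‖x - y‖ + ‖y‖ := by simpa using norm_add_le (x - y) y
            have t2 : ‖x - y‖ ≤ ‖x‖ + ‖y‖ := norm_sub_le x y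
            rw [if_pos (by linarith)]
            have : ‖x‖ₑ ^ e ≤ 2 ^ |e| * ‖x - y‖ₑ ^ e := by
              apply rpow_comp
              · rw [← ofReal_norm, ← ofReal_norm]
                exact ofReal_le_two (by linarith)
              · rw [← ofReal_norm, ← ofReal_norm]
                exact ofReal_le_two (by linarith)
            calc ‖x‖ₑ ^ e * (φ y * φ (x - y) ^ p)
                ≤ (2 ^ |e| * ‖x - y‖ₑ ^ e) * (φ y * φ (x - y) ^ p) := by gcongr
              _ = _ := by simp only [hhh]; ring
          · rw [indicator_of_notMem (by simpa [hB] using h)]; exact bot_le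
      _ = _ := by ring
  -- double integral
  have ms : MeasurableSet {q : Ed d × Ed d | ‖q.2‖ < ‖q.1 - q.2‖} :=
    measurableSet_lt (by fun_prop) (by fun_prop)
  have ms' : MeasurableSet {q : Ed d × Ed d | ‖q.1‖ < ‖q.2‖} :=
    measurableSet_lt (by fun_prop) (by fun_prop)
  have dbl : ∫⁻ x, ∫⁻ y, (if ‖y‖ < ‖x - y‖ then φ y * hh (x - y) else 0) ≤ M * N := by
    rw [lintegral_lintegral_swap
      (f := fun x y => if ‖y‖ < ‖x - y‖ then φ y * hh (x - y) else 0)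
      (Measurable.ite ms (by fun_prop) (by fun_prop)).aemeasurable]
    have : ∀ y : Ed d, ∫⁻ x, (if ‖y‖ < ‖x - y‖ then φ y * hh (x - y) else 0)
        = ∫⁻ z, (if ‖y‖ < ‖z‖ then φ y * hh z else 0) := fun y =>
      lintegral_sub_right_eq_self (fun z => if ‖y‖ < ‖z‖ then φ y * hh z else 0) y
    simp_rw [this]
    rw [lintegral_lintegral_swap
      (f := fun y z => if ‖y‖ < ‖z‖ then φ y * hh z else 0)
      (Measurable.ite ms' (by fun_prop) (by fun_prop)).aemeasurable]
    have hMN : M * N = M * ∫⁻ z, (φ z * ‖z‖ₑ ^ ν) ^ p := rfl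
    rw [hMN, ← lintegral_const_mul _ (by fun_prop)]
    refine lintegral_mono_ae ?_
    filter_upwards [ae_ne_zero hd] with z hz
    have hz0 : ‖z‖ₑ ≠ 0 := by simpa using hz
    calc ∫⁻ y, (if ‖y‖ < ‖z‖ then φ y * hh z else 0)
        = (∫⁻ y in Metric.ball (0 : Ed d) ‖z‖, φ y) * hh z := by
          rw [← lintegral_mul_const _ hφ, ← lintegral_indicator measurableSet_ball]
          refine lintegral_congr fun y => ?_
          by_cases h : ‖y‖ < ‖z‖
          · rw [indicator_of_mem (by simpa using h)]; simp [h]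
          · rw [indicator_of_notMem (by simpa using h)]; simp [h]
      _ ≤ (M * ‖z‖ₑ ^ σ) * hh z := by gcongr; exact hball z hz
      _ = M * (φ z * ‖z‖ₑ ^ ν) ^ p := by
          rw [ENNReal.mul_rpow_of_nonneg _ _ hp0.le, ← ENNReal.rpow_mul]
          have : ‖z‖ₑ ^ (ν * p) = ‖z‖ₑ ^ σ * ‖z‖ₑ ^ e := by
            rw [← ENNReal.rpow_add _ _ hz0 enorm_ne_top]; congr 1; rw [he]; ring
          rw [this]; simp only [hhh]; ring
  have mm : Measurable fun x => ∫⁻ y, (if ‖y‖ < ‖x - y‖ then φ y * hh (x - y) else 0) :=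
    Measurable.lintegral_prod_right'
      (f := fun q : Ed d × Ed d => if ‖q.2‖ < ‖q.1 - q.2‖ then φ q.2 * hh (q.1 - q.2) else 0)
      (Measurable.ite ms (by fun_prop) (by fun_prop))
  calc ∫⁻ x, (Fi φ x * ‖x‖ₑ ^ (ν - σ)) ^ p
      ≤ ∫⁻ x, (M ^ (p - 1) * 2 ^ |e|) *
          ∫⁻ y, if ‖y‖ < ‖x - y‖ then φ y * hh (x - y) else 0 := by
        refine lintegral_mono_ae ?_
        filter_upwards [ae_ne_zero hd] with x hx using key x hx
    _ ≤ (M ^ (p - 1) * 2 ^ |e|) * (M * N) := by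
        rw [lintegral_const_mul _ mm]; gcongr
    _ = 2 ^ |e| * (M ^ (p - 1) * M ^ (1:ℝ)) * N := by rw [ENNReal.rpow_one]; ring
    _ = 2 ^ |e| * C ^ p * N ^ (2:ℝ) := by
        rw [← ENNReal.rpow_add_of_nonneg _ _ hp1 zero_le_one, sub_add_cancel, hM,
          ENNReal.mul_rpow_of_nonneg _ _ hp0.le, ← ENNReal.rpow_mul]
        have : 1 / p * p = 1 := by field_simp
        rw [this, ENNReal.rpow_one, ENNReal.rpow_two]; ring


/-- the exponential kernel -/
noncomputable def Ek {d : ℕ} (γ : ℝ) (t : ℝ) (η : Ed d) : ℝ≥0∞ :=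
  ENNReal.ofReal (Real.exp (‖η‖ ^ γ * (1 - t ^ γ)))

lemma Ek_meas {d : ℕ} (γ : ℝ) : Measurable fun q : ℝ × Ed d => Ek γ q.1 q.2 := by
  unfold Ek; fun_prop

lemma Ek_meas' {d : ℕ} (γ : ℝ) : Measurable fun q : Ed d × ℝ => Ek γ q.2 q.1 := by
  unfold Ek; fun_prop

lemma Ek_meas1 {d : ℕ} (γ : ℝ) (η : Ed d) : Measurable fun t : ℝ => Ek γ t η := by
  unfold Ek; fun_prop

lemma Ek_le {d : ℕ} {γ : ℝ} (hγ : 1 < γ) {a : ℝ} (ha0 : 0 ≤ a) (ha1 : a ≤ 1) {t : ℝ} (ht : 1 < t)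
    {η : Ed d} (hη : η ≠ 0) :
    Ek γ t η ≤ ENNReal.ofReal (t - 1) ^ (-a) * ‖η‖ₑ ^ (-(γ * a)) := by
  have hn : 0 < ‖η‖ := norm_pos_iff.2 hη
  have hng : 0 < ‖η‖ ^ γ := by positivity
  have ht1 : 0 < t - 1 := by linarith
  rw [enorm_rpow_real hη, ENNReal.ofReal_rpow_of_pos ht1, ← ENNReal.ofReal_mul (by positivity)]
  refine ENNReal.ofReal_le_ofReal ?_
  set x := (t - 1) * ‖η‖ ^ γ with hx
  have hx0 : 0 < x := by positivity
  have e1 : (t - 1) ^ (-a) * ‖η‖ ^ (-(γ * a)) = (x ^ a)⁻¹ := by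
    rw [hx, Real.mul_rpow ht1.le hng.le, ← Real.rpow_mul hn.le, mul_inv, Real.rpow_neg ht1.le,
      Real.rpow_neg hn.le]
  have e2 : x ^ a ≤ Real.exp x := by
    have : x ^ a ≤ 1 + x := by
      rcases le_total x 1 with h | h
      · have := Real.rpow_le_one hx0.le h ha0; linarith
      · have := Real.rpow_le_rpow_of_exponent_le h ha1; rw [Real.rpow_one] at this; linarith
    linarith [Real.add_one_le_exp x]
  have e3 : t ≤ t ^ γ := by
    simpa using Real.rpow_le_rpow_of_exponent_le ht.le hγ.le
  rw [e1]
  calc Real.exp (‖η‖ ^ γ * (1 - t ^ γ)) ≤ Real.exp (-x) := by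
        apply Real.exp_le_exp.2; rw [hx]; nlinarith
    _ = (Real.exp x)⁻¹ := Real.exp_neg x
    _ ≤ _ := by gcongr

lemma Lam_fin {a T : ℝ} (ha : a < 1) (hT : 1 < T) :
    ∫⁻ t in Ioc 1 T, ENNReal.ofReal (t - 1) ^ (-a) ≠ ⊤ := by
  have h1 : IntervalIntegrable (fun t : ℝ => t ^ (-a)) volume 0 (T - 1) :=
    intervalIntegral.intervalIntegrable_rpow' (by linarith)
  have h2 := h1.comp_sub_right 1
  simp only [zero_add, sub_add_cancel] at h2
  have h3 := (intervalIntegrable_iff_integrableOn_Ioc_of_le hT.le).1 h2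
  have := h3.2
  rw [hasFiniteIntegral_iff_enorm] at this
  refine (lt_of_le_of_lt ?_ this).ne
  refine setLIntegral_mono_ae' measurableSet_Ioc (Filter.Eventually.of_forall fun t ht => ?_)
  have : 0 < t - 1 := by linarith [ht.1]
  rw [ENNReal.ofReal_rpow_of_pos this, Real.enorm_eq_ofReal (by positivity)]

/-- bilinear functional -/
noncomputable def Kf {d : ℕ} (γ T : ℝ) (F : Ed d → ℝ≥0∞) (η : Ed d) : ℝ≥0∞ :=
  ∫⁻ t in Ioc 1 T, Ek γ t η * ‖η‖ₑ * F (t • η)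

lemma Kf_meas {d : ℕ} (γ T : ℝ) {F : Ed d → ℝ≥0∞} (hF : Measurable F) :
    Measurable (Kf γ T F) := by
  have h2 : Measurable fun q : Ed d × ℝ => Ek γ q.2 q.1 := Ek_meas' γ
  have h3 : Measurable fun q : Ed d × ℝ => ‖q.1‖ₑ := measurable_enorm.comp measurable_fst
  have h4 : Measurable fun q : Ed d × ℝ => F (q.2 • q.1) :=
    hF.comp (measurable_snd.smul measurable_fst)
  have hm : Measurable fun q : Ed d × ℝ => Ek γ q.2 q.1 * ‖q.1‖ₑ * F (q.2 • q.1) := (h2.mul h3).mul h4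
  exact hm.lintegral_prod_right' (ν := volume.restrict (Ioc 1 T))

lemma K_near {d : ℕ} (hd : 2 ≤ d) {p ν γ T : ℝ} (hγ : 1 < γ) (hT : 1 < T) (hp : 1 < p)
    (hs : d / p + ν < d) (hm : d + 1 - (d / p + ν) < γ) :
    ∃ C : ℝ≥0∞, C ≠ ⊤ ∧ ∀ φ : Ed d → ℝ≥0∞, Measurable φ →
      ∫⁻ η, (Kf γ T (Fi φ) η * ‖η‖ₑ ^ ν) ^ p ≤ C * Nrg p ν φ ^ (2:ℝ) := by
  obtain ⟨C, hC, hC2⟩ := C2 hd hp hs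
  set m : ℝ := d + 1 - (d / p + ν) with hmd
  set k : ℝ := ν - (d - (d / p + ν)) with hk
  have hm0 : 0 < m := by rw [hmd]; linarith
  set a := m / γ with ha
  have hγ0 : 0 < γ := by linarith
  have hp0 : 0 < p := by linarith
  have ha1 : a < 1 := by rw [ha, div_lt_one hγ0]; exact hm
  have ha0 : 0 ≤ a := by positivity
  set Λ := ∫⁻ t in Ioc 1 T, ENNReal.ofReal (t - 1) ^ (-a) with hΛ
  have hΛt : Λ ≠ ⊤ := Lam_fin ha1 hT
  set D : ℝ≥0∞ := ENNReal.ofReal T ^ (|k * p| + d) with hD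
  have hDt : D ≠ ⊤ := ENNReal.rpow_ne_top_of_nonneg (by positivity) (by simp)
  refine ⟨Λ ^ (p - 1) * (Λ * (D * C)), ENNReal.mul_ne_top
    (ENNReal.rpow_ne_top_of_nonneg (by linarith) hΛt)
    (ENNReal.mul_ne_top hΛt (ENNReal.mul_ne_top hDt hC)), fun φ hφ => ?_⟩
  have mF := Fi_meas hφ
  set μ := (volume.restrict (Ioc 1 T)).withDensity fun t => ENNReal.ofReal (t - 1) ^ (-a) with hμ
  have mw : Measurable fun t : ℝ => ENNReal.ofReal (t - 1) ^ (-a) := by fun_prop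
  have hμu : μ univ = Λ := by
    rw [hμ, withDensity_apply _ MeasurableSet.univ, Measure.restrict_univ]
  have : IsFiniteMeasure μ := ⟨by rw [hμu]; exact hΛt.lt_top⟩
  have mG : Measurable fun q : Ed d × ℝ => (Fi φ (q.2 • q.1) * ‖q.1‖ₑ ^ k) ^ p := by fun_prop
  have step1 : ∀ η : Ed d, η ≠ 0 → (Kf γ T (Fi φ) η * ‖η‖ₑ ^ ν) ^ p ≤
      Λ ^ (p - 1) * ∫⁻ t, (Fi φ (t • η) * ‖η‖ₑ ^ k) ^ p ∂μ := by
    intro η hη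
    have h0 : ‖η‖ₑ ≠ 0 := by simpa using hη
    have : Kf γ T (Fi φ) η * ‖η‖ₑ ^ ν ≤ ∫⁻ t, Fi φ (t • η) * ‖η‖ₑ ^ k ∂μ := by
      rw [hμ, lintegral_withDensity_eq_lintegral_mul _ mw (by fun_prop), Kf,
        ← lintegral_mul_const' _ _ (ENNReal.rpow_ne_top_of_ne_zero h0 enorm_ne_top)]
      refine setLIntegral_mono_ae' measurableSet_Ioc (Filter.Eventually.of_forall fun t ht => ?_)
      have hE := Ek_le hγ ha0 ha1.le ht.1 hη
      have hga : γ * a = m := by rw [ha]; field_simp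
      rw [hga] at hE
      have hkk : ‖η‖ₑ ^ k = ‖η‖ₑ ^ (-m) * ‖η‖ₑ * ‖η‖ₑ ^ ν := by
        nth_rewrite 3 [← ENNReal.rpow_one ‖η‖ₑ]
        rw [← ENNReal.rpow_add _ _ h0 enorm_ne_top, ← ENNReal.rpow_add _ _ h0 enorm_ne_top]
        congr 1; rw [hk, hmd]; ring
      calc Ek γ t η * ‖η‖ₑ * Fi φ (t • η) * ‖η‖ₑ ^ ν
          ≤ (ENNReal.ofReal (t - 1) ^ (-a) * ‖η‖ₑ ^ (-m)) * ‖η‖ₑ * Fi φ (t • η) * ‖η‖ₑ ^ ν := by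
            gcongr
        _ = _ := by simp only [Pi.mul_apply, hkk]; ring
    calc (Kf γ T (Fi φ) η * ‖η‖ₑ ^ ν) ^ p ≤ (∫⁻ t, Fi φ (t • η) * ‖η‖ₑ ^ k ∂μ) ^ p := by gcongr
      _ ≤ _ := by
        rw [← hμu]; exact lint_pow_le _ (by fun_prop) hp
  have step2 : ∀ t ∈ Ioc 1 T, ∫⁻ η, (Fi φ (t • η) * ‖η‖ₑ ^ k) ^ p ≤
      D * (C * Nrg p ν φ ^ (2:ℝ)) := by
    intro t ht
    have ht0 : 0 < t := by linarith [ht.1]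
    have hto : ENNReal.ofReal t ≠ 0 := by simpa using ht0
    have h1 : ∀ η : Ed d, (Fi φ (t • η) * ‖η‖ₑ ^ k) ^ p =
        ENNReal.ofReal t ^ (-(k * p)) * (Fi φ (t • η) * ‖t • η‖ₑ ^ k) ^ p := by
      intro η
      rw [enorm_smul_rpow _ ht0, ENNReal.mul_rpow_of_nonneg _ _ hp0.le,
        ENNReal.mul_rpow_of_nonneg _ _ hp0.le, ENNReal.mul_rpow_of_nonneg _ _ hp0.le]
      rw [← ENNReal.rpow_mul (ENNReal.ofReal t)]
      have : ENNReal.ofReal t ^ (-(k * p)) * ENNReal.ofReal t ^ (k * p) = 1 := by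
        rw [← ENNReal.rpow_add _ _ hto (by simp)]; simp
      calc _ = (ENNReal.ofReal t ^ (-(k * p)) * ENNReal.ofReal t ^ (k * p)) *
            (Fi φ (t • η) ^ p * (‖η‖ₑ ^ k) ^ p) := by rw [this, one_mul]
        _ = _ := by ring
    simp_rw [h1]
    rw [lintegral_const_mul _ (by fun_prop),
      lint_smul (fun x => (Fi φ x * ‖x‖ₑ ^ k) ^ p) (by fun_prop) ht0, ← mul_assoc]
    gcongr
    · rw [← ENNReal.rpow_add _ _ hto (by simp), hD]
      have hT1 : (1:ℝ≥0∞) ≤ ENNReal.ofReal t := by simpa using ht.1.le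
      calc ENNReal.ofReal t ^ (-(k * p) + -(d:ℝ)) ≤ ENNReal.ofReal t ^ (|k * p| + d) := by
            apply ENNReal.rpow_le_rpow_of_exponent_le hT1
            have := neg_abs_le (k * p)
            have : (0:ℝ) ≤ d := by positivity
            linarith
        _ ≤ _ := by
            apply ENNReal.rpow_le_rpow _ (by positivity)
            exact ENNReal.ofReal_le_ofReal ht.2
    · exact hC2 φ hφ
  calc ∫⁻ η, (Kf γ T (Fi φ) η * ‖η‖ₑ ^ ν) ^ p
      ≤ ∫⁻ η, Λ ^ (p - 1) * ∫⁻ t, (Fi φ (t • η) * ‖η‖ₑ ^ k) ^ p ∂μ := by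
        refine lintegral_mono_ae ?_
        filter_upwards [ae_ne_zero hd] with η hη using step1 η hη
    _ = Λ ^ (p - 1) * ∫⁻ t, (∫⁻ η, (Fi φ (t • η) * ‖η‖ₑ ^ k) ^ p) ∂μ := by
        rw [lintegral_const_mul _ (Measurable.lintegral_prod_right' (ν := μ) mG),
          lintegral_lintegral_swap (f := fun η t => (Fi φ (t • η) * ‖η‖ₑ ^ k) ^ p) mG.aemeasurable]
    _ ≤ Λ ^ (p - 1) * (Λ * (D * (C * Nrg p ν φ ^ (2:ℝ)))) := by
        refine mul_le_mul' le_rfl ?_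
        have mG' : Measurable fun t : ℝ => ∫⁻ η : Ed d, (Fi φ (t • η) * ‖η‖ₑ ^ k) ^ p :=
          Measurable.lintegral_prod_right' (f := fun q : ℝ × Ed d =>
            (Fi φ (q.1 • q.2) * ‖q.2‖ₑ ^ k) ^ p) (by fun_prop)
        rw [hμ, lintegral_withDensity_eq_lintegral_mul _ mw mG', hΛ, ← lintegral_mul_const _ mw]
        refine setLIntegral_mono_ae' measurableSet_Ioc (Filter.Eventually.of_forall fun t ht => ?_)
        exact mul_le_mul' le_rfl (step2 t ht)
    _ = _ := by ring

lemma K_far {d : ℕ} (hd : 2 ≤ d) {p ν γ T : ℝ} (hγ : 1 < γ) (hT : 1 < T) (hp : 2 < p)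
    (hs2 : (d:ℝ) < 2 * (d / p + ν))
    (hs : d / p + ν < d) (hm : d + 1 - (d / p + ν) < γ) :
    ∃ C : ℝ≥0∞, C ≠ ⊤ ∧ ∀ φ : Ed d → ℝ≥0∞, Measurable φ →
      ∫⁻ η, (Kf γ T (Dfar φ) η * ‖η‖ₑ ^ ν) ^ p ≤ C * Nrg p ν φ ^ (2:ℝ) := by
  obtain ⟨C, hC, hC1⟩ := C1' hd hp hs2
  set m : ℝ := d + 1 - (d / p + ν) with hmd
  set s : ℝ := d / p + ν with hsd
  have hm0 : 0 < m := by rw [hmd]; linarith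
  have hγ0 : 0 < γ := by linarith
  have hp0 : 0 < p := by linarith
  obtain ⟨a, ha, ha1⟩ : ∃ a, m / γ < a ∧ a < 1 :=
    exists_between (by rw [div_lt_one hγ0]; exact hm)
  have ha0 : 0 ≤ a := le_trans (by positivity) ha.le
  have hma : m < γ * a := by rwa [div_lt_iff₀' hγ0] at ha
  set Λ : ℝ → ℝ≥0∞ := fun a => ∫⁻ t in Ioc 1 T, ENNReal.ofReal (t - 1) ^ (-a) with hΛ
  have hΛ0 : Λ 0 ≠ ⊤ := Lam_fin zero_lt_one hT
  have hΛa : Λ a ≠ ⊤ := Lam_fin ha1 hT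
  set C' : ℝ≥0∞ := C * 2 ^ |d - 2 * s| with hC'
  have hCt' : C' ≠ ⊤ :=
    ENNReal.mul_ne_top hC (ENNReal.rpow_ne_top_of_nonneg (abs_nonneg _) (by simp))
  set I0 := ∫⁻ x in Metric.ball (0 : Ed d) 1, ‖x‖ₑ ^ (m * p - d) with hI0
  set I1 := ∫⁻ x in (Metric.ball (0 : Ed d) 1)ᶜ, ‖x‖ₑ ^ ((m - γ * a) * p - d) with hI1
  have hI0t : I0 ≠ ⊤ := lint_ball_one hd (by nlinarith)
  have hI1t : I1 ≠ ⊤ := lint_compl_one hd (by nlinarith)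
  have tp : ∀ x : ℝ≥0∞, x ≠ ⊤ → x ^ p ≠ ⊤ := fun x hx => ENNReal.rpow_ne_top_of_nonneg hp0.le hx
  refine ⟨C' ^ p * (Λ 0 ^ p * I0 + Λ a ^ p * I1), ENNReal.mul_ne_top (tp _ hCt')
    (ENNReal.add_ne_top.2 ⟨ENNReal.mul_ne_top (tp _ hΛ0) hI0t,
      ENNReal.mul_ne_top (tp _ hΛa) hI1t⟩), fun φ hφ => ?_⟩
  set N := Nrg p ν φ with hN
  have hDf : ∀ x : Ed d, x ≠ 0 → Dfar φ x ≤ C' * N ^ (2 / p) * ‖x‖ₑ ^ (d - 2 * s) := by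
    intro x hx
    have hn : 0 < ‖x‖ := norm_pos_iff.2 hx
    have h := hC1 φ hφ (‖x‖ / 2) (by positivity)
    have e : Dfar φ x = ∫⁻ y in (Metric.ball 0 (‖x‖ / 2))ᶜ, φ y ^ (2:ℝ) := by
      rw [← lintegral_indicator measurableSet_ball.compl]
      refine lintegral_congr fun y => ?_
      by_cases h : ‖y‖ < ‖x‖ / 2
      · rw [indicator_of_notMem (by simpa using h)]; simp [h]
      · rw [indicator_of_mem (by simpa using h)]; simp [h]
    rw [e]
    refine h.trans ?_
    have : ENNReal.ofReal (‖x‖ / 2) ^ (d - 2 * s) ≤ 2 ^ |d - 2 * s| * ‖x‖ₑ ^ (d - 2 * s) := by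
      rw [← ofReal_norm]
      exact rpow_comp (ofReal_le_two (by linarith)) (ofReal_le_two (by linarith)) _
    calc C * N ^ (2 / p) * ENNReal.ofReal (‖x‖ / 2) ^ (d - 2 * s)
        ≤ C * N ^ (2 / p) * (2 ^ |d - 2 * s| * ‖x‖ₑ ^ (d - 2 * s)) := by gcongr
      _ = _ := by rw [hC']; ring
  have hDt : ∀ x : Ed d, x ≠ 0 → ∀ t ∈ Ioc 1 T, Dfar φ (t • x) ≤
      C' * N ^ (2 / p) * ‖x‖ₑ ^ (d - 2 * s) := by
    intro x hx t ht
    have ht0 : 0 < t := by linarith [ht.1]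
    refine (hDf (t • x) (smul_ne_zero ht0.ne' hx)).trans ?_
    rw [enorm_smul_rpow _ ht0]
    have : ENNReal.ofReal t ^ (d - 2 * s) ≤ 1 := by
      rw [ENNReal.ofReal_rpow_of_pos ht0]
      refine ENNReal.ofReal_le_one.2 (Real.rpow_le_one_of_one_le_of_nonpos ht.1.le (by linarith))
    refine mul_le_mul' le_rfl ?_
    calc _ ≤ 1 * ‖x‖ₑ ^ (d - 2 * s) := by gcongr
      _ = _ := one_mul _
  have hK : ∀ b, 0 ≤ b → b < 1 → ∀ η : Ed d, η ≠ 0 → (Kf γ T (Dfar φ) η * ‖η‖ₑ ^ ν) ^ p ≤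
      (C' ^ p * N ^ (2:ℝ) * Λ b ^ p) * ‖η‖ₑ ^ ((m - γ * b) * p - d) := by
    intro b hb0 hb1 η hη
    have h0 : ‖η‖ₑ ≠ 0 := by simpa using hη
    have h2 : Kf γ T (Dfar φ) η ≤ Λ b * (‖η‖ₑ ^ (-(γ * b)) * ‖η‖ₑ *
        (C' * N ^ (2 / p) * ‖η‖ₑ ^ (d - 2 * s))) := by
      rw [hΛ, Kf]
      simp only
      rw [← lintegral_mul_const _ (by fun_prop)]
      refine setLIntegral_mono_ae' measurableSet_Ioc (Filter.Eventually.of_forall fun t ht => ?_)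
      calc Ek γ t η * ‖η‖ₑ * Dfar φ (t • η)
          ≤ (ENNReal.ofReal (t - 1) ^ (-b) * ‖η‖ₑ ^ (-(γ * b))) * ‖η‖ₑ *
            (C' * N ^ (2 / p) * ‖η‖ₑ ^ (d - 2 * s)) := by
            gcongr
            · exact Ek_le hγ hb0 hb1.le ht.1 hη
            · exact hDt η hη t ht
        _ = _ := by ring
    have h3 : ‖η‖ₑ ^ (-(γ * b)) * ‖η‖ₑ ^ (1:ℝ) * ‖η‖ₑ ^ (d - 2 * s) * ‖η‖ₑ ^ ν =
        ‖η‖ₑ ^ (m - γ * b - d / p) := by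
      rw [← ENNReal.rpow_add _ _ h0 enorm_ne_top, ← ENNReal.rpow_add _ _ h0 enorm_ne_top,
        ← ENNReal.rpow_add _ _ h0 enorm_ne_top]
      congr 1; rw [hmd, hsd]; ring
    have h4 : ((m - γ * b - d / p)) * p = (m - γ * b) * p - d := by field_simp
    calc (Kf γ T (Dfar φ) η * ‖η‖ₑ ^ ν) ^ p
        ≤ (Λ b * (‖η‖ₑ ^ (-(γ * b)) * ‖η‖ₑ *
        (C' * N ^ (2 / p) * ‖η‖ₑ ^ (d - 2 * s))) * ‖η‖ₑ ^ ν) ^ p := by gcongr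
      _ = (C' * N ^ (2 / p) * Λ b * ‖η‖ₑ ^ (m - γ * b - d / p)) ^ p := by
          rw [← h3, ENNReal.rpow_one]; congr 1; ring
      _ = _ := by
          rw [ENNReal.mul_rpow_of_nonneg _ _ hp0.le, ENNReal.mul_rpow_of_nonneg _ _ hp0.le,
            ENNReal.mul_rpow_of_nonneg _ _ hp0.le, ← ENNReal.rpow_mul, ← ENNReal.rpow_mul, h4]
          congr 4; field_simp
  rw [← lintegral_add_compl _ (measurableSet_ball (x := (0 : Ed d)) (ε := 1))]
  have mpow : ∀ c : ℝ, Measurable fun η : Ed d => ‖η‖ₑ ^ c := fun c => by fun_prop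
  calc _ ≤ (∫⁻ η in Metric.ball (0 : Ed d) 1, (C' ^ p * N ^ (2:ℝ) * Λ 0 ^ p) * ‖η‖ₑ ^ (m * p - d))
        + ∫⁻ η in (Metric.ball (0 : Ed d) 1)ᶜ,
          (C' ^ p * N ^ (2:ℝ) * Λ a ^ p) * ‖η‖ₑ ^ ((m - γ * a) * p - d) := by
        refine add_le_add (lintegral_mono_ae (ae_restrict_of_ae ?_))
          (lintegral_mono_ae (ae_restrict_of_ae ?_))
        · filter_upwards [ae_ne_zero hd] with η hη
          simpa using hK 0 le_rfl one_pos η hη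
        · filter_upwards [ae_ne_zero hd] with η hη
          exact hK a ha0 ha1 η hη
    _ = _ := by
        rw [lintegral_const_mul _ (mpow _), lintegral_const_mul _ (mpow _)]; ring

lemma K_all {d : ℕ} (hd : 2 ≤ d) {p ν γ T : ℝ} (hγ : 1 < γ) (hT : 1 < T) (hp : 2 < p)
    (hs2 : (d:ℝ) < 2 * (d / p + ν))
    (hs : d / p + ν < d) (hm : d + 1 - (d / p + ν) < γ) :
    ∃ C : ℝ≥0∞, C ≠ ⊤ ∧ ∀ φ : Ed d → ℝ≥0∞, Measurable φ →
      ∫⁻ η, (Kf γ T (cnv φ) η * ‖η‖ₑ ^ ν) ^ p ≤ C * Nrg p ν φ ^ (2:ℝ) := by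
  obtain ⟨Ca, hCa, ha⟩ := K_near hd hγ hT (by linarith) hs hm
  obtain ⟨Cb, hCb, hb⟩ := K_far hd hγ hT hp hs2 hs hm
  have hp0 : 0 < p := by linarith
  have t2 : (2:ℝ≥0∞) ^ p ≠ ⊤ := ENNReal.rpow_ne_top_of_nonneg hp0.le (by simp)
  have t3 : (2:ℝ≥0∞) ^ (p-1) ≠ ⊤ := ENNReal.rpow_ne_top_of_nonneg (by linarith) (by simp)
  refine ⟨2 ^ p * 2 ^ (p - 1) * (Ca + Cb), ENNReal.mul_ne_top (ENNReal.mul_ne_top t2 t3)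
    (ENNReal.add_ne_top.2 ⟨hCa, hCb⟩), fun φ hφ => ?_⟩
  have mFi := Fi_meas hφ
  have mD := Dfar_meas hφ
  have mKi := Kf_meas γ T mFi
  have mKd := Kf_meas γ T mD
  have h1 : ∀ η, Kf γ T (cnv φ) η ≤ 2 * (Kf γ T (Fi φ) η + Kf γ T (Dfar φ) η) := by
    intro η
    have mE : Measurable fun t : ℝ => Ek γ t η := Ek_meas1 γ η
    unfold Kf
    have ms : Measurable fun t : ℝ => t • η := measurable_id.smul_const η
    have m1 : Measurable fun t : ℝ => Ek γ t η * ‖η‖ₑ * Fi φ (t • η) :=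
      (mE.mul_const _).mul (mFi.comp ms)
    have m2 : Measurable fun t : ℝ => Ek γ t η * ‖η‖ₑ * Dfar φ (t • η) :=
      (mE.mul_const _).mul (mD.comp ms)
    rw [← lintegral_add_left m1, ← lintegral_const_mul' _ _ (by simp)]
    refine lintegral_mono fun t => ?_
    calc Ek γ t η * ‖η‖ₑ * cnv φ (t • η)
        ≤ Ek γ t η * ‖η‖ₑ * (2 * (Fi φ (t • η) + Dfar φ (t • η))) := by
          gcongr; exact cnv_le hφ _
      _ = _ := by ring
  have mp : Measurable fun η : Ed d => ‖η‖ₑ ^ ν := by fun_prop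
  have n1 : Measurable fun η : Ed d => (Kf γ T (Fi φ) η * ‖η‖ₑ ^ ν) ^ p := (mKi.mul mp).pow_const p
  have n2 : Measurable fun η : Ed d => (Kf γ T (Dfar φ) η * ‖η‖ₑ ^ ν) ^ p :=
    (mKd.mul mp).pow_const p
  calc ∫⁻ η, (Kf γ T (cnv φ) η * ‖η‖ₑ ^ ν) ^ p
      ≤ ∫⁻ η, (2 ^ p * 2 ^ (p - 1)) * ((Kf γ T (Fi φ) η * ‖η‖ₑ ^ ν) ^ p +
          (Kf γ T (Dfar φ) η * ‖η‖ₑ ^ ν) ^ p) := by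
        refine lintegral_mono fun η => ?_
        calc (Kf γ T (cnv φ) η * ‖η‖ₑ ^ ν) ^ p
            ≤ (2 * (Kf γ T (Fi φ) η + Kf γ T (Dfar φ) η) * ‖η‖ₑ ^ ν) ^ p := by
              gcongr; exact h1 η
          _ = 2 ^ p * (Kf γ T (Fi φ) η * ‖η‖ₑ ^ ν + Kf γ T (Dfar φ) η * ‖η‖ₑ ^ ν) ^ p := by
              rw [← ENNReal.mul_rpow_of_nonneg _ _ hp0.le]; congr 1; ring
          _ ≤ 2 ^ p * (2 ^ (p - 1) * ((Kf γ T (Fi φ) η * ‖η‖ₑ ^ ν) ^ p +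
              (Kf γ T (Dfar φ) η * ‖η‖ₑ ^ ν) ^ p)) := by
              refine mul_le_mul' le_rfl ?_
              exact ENNReal.rpow_add_le_mul_rpow_add_rpow _ _ (by linarith)
          _ = _ := by ring
    _ ≤ (2 ^ p * 2 ^ (p - 1)) * (Ca * Nrg p ν φ ^ (2:ℝ) + Cb * Nrg p ν φ ^ (2:ℝ)) := by
        rw [lintegral_const_mul' _ _ (ENNReal.mul_ne_top t2 t3), lintegral_add_left n1]
        refine mul_le_mul' le_rfl (add_le_add ?_ ?_)
        · exact ha φ hφ
        · exact hb φ hφ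
    _ = _ := by ring


lemma pairC_bound {d : ℕ} (η : Ed d) (v : EdC d) : ‖pairC η v‖ ≤ ‖η‖ * ‖v‖ := by
  have h : pairC η v = inner ℂ (toC η) v := by
    simp [pairC, toC, PiLp.inner_apply, mul_comm]
  have h2 : ‖toC η‖ = ‖η‖ := by
    simp [EuclideanSpace.norm_eq, toC]
  rw [h, ← h2]
  exact norm_inner_le_norm _ _

lemma lerayC_bound {d : ℕ} (η : Ed d) (v : EdC d) : ‖lerayC η v‖ ≤ ‖v‖ := by
  have h : pairC η v = inner ℂ (toC η) v := by
    simp [pairC, toC, PiLp.inner_apply, mul_comm]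
  have h2 : ‖toC η‖ = ‖η‖ := by
    simp [EuclideanSpace.norm_eq, toC]
  set e := toC η with he
  have h3 : lerayC η v = v - (inner ℂ e v / ((‖e‖ ^ 2 : ℝ) : ℂ)) • e := by
    ext i
    have hi : e i = (η i : ℂ) := by simp [he, toC]
    rw [h2]
    simp [lerayC, h, hi]
  by_cases h0 : e = 0
  · rw [h3, h0]; simp
  have hn : (‖e‖ : ℂ) ≠ 0 := by simpa using h0
  set a := (inner ℂ e v / ((‖e‖ ^ 2 : ℝ) : ℂ)) with ha
  have ho : inner ℂ (a • e) (v - a • e) = 0 := by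
    rw [inner_smul_left, inner_sub_right, inner_smul_right, inner_self_eq_norm_sq_to_K, ha]
    have : inner ℂ e v - inner ℂ e v / ((‖e‖ ^ 2 : ℝ) : ℂ) * (‖e‖ : ℂ) ^ 2 = 0 := by
      push_cast; field_simp; simp
    erw [this]; simp
  have := norm_add_sq_eq_norm_sq_add_norm_sq_of_inner_eq_zero _ _ ho
  rw [add_sub_cancel] at this
  rw [h3]
  nlinarith [norm_nonneg v, norm_nonneg (v - a • e), norm_nonneg (a • e)]

lemma pairC_meas {d : ℕ} : Measurable fun q : Ed d × EdC d => pairC q.1 q.2 := by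
  unfold pairC
  refine Finset.measurable_sum _ fun i _ => ?_
  fun_prop

lemma lerayC_meas {d : ℕ} : Measurable fun q : Ed d × EdC d => lerayC q.1 q.2 := by
  unfold lerayC
  have := pairC_meas (d := d)
  refine (WithLp.measurable_toLp 2 (Fin d → ℂ)).comp (measurable_pi_lambda _ fun i => ?_)
  fun_prop

lemma kern_meas {d : ℕ} (γ : ℝ) {ϑ : Ed d → EdC d} (h : Measurable ϑ) :
    Measurable fun q : (Ed d × ℝ) × Ed d => renormKernelC d γ ϑ q.1.1 q.1.2 q.2 := by
  have m1 : Measurable fun q : (Ed d × ℝ) × Ed d => pairC q.1.1 (ϑ (q.1.2 • q.1.1 - q.2)) :=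
    pairC_meas.comp (f := fun q : (Ed d × ℝ) × Ed d => (q.1.1, ϑ (q.1.2 • q.1.1 - q.2)))
      (by fun_prop)
  have m2 : Measurable fun q : (Ed d × ℝ) × Ed d => lerayC q.1.1 (ϑ q.2) :=
    lerayC_meas.comp (f := fun q : (Ed d × ℝ) × Ed d => (q.1.1, ϑ q.2))
      (by fun_prop)
  have m3 : Measurable fun q : (Ed d × ℝ) × Ed d =>
      (q.1.2 ^ (-(γ - d - 1)) * Real.exp (‖q.1.1‖ ^ γ * (1 - q.1.2 ^ γ))) := by fun_prop
  exact m3.smul (m1.smul m2)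

lemma refl_mp {d : ℕ} (a : Ed d) : MeasurePreserving (fun x : Ed d => a - x) volume volume :=
  Measure.measurePreserving_sub_left volume a

lemma renorm_meas {d : ℕ} {γ β : ℝ} (hβ : 0 < β) {ϑ : Ed d → EdC d}
    (h : AEStronglyMeasurable ϑ volume) : AEStronglyMeasurable (renormC d γ β ϑ) volume := by
  set ϑ' := h.mk ϑ with hd'
  have hm : Measurable ϑ' := h.stronglyMeasurable_mk.measurable
  have he : ϑ =ᵐ[volume] ϑ' := h.ae_eq_mk
  have hsm : StronglyMeasurable (renormC d γ β ϑ') := by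
    have hk := (kern_meas γ hm).stronglyMeasurable
    have i1 := hk.integral_prod_right' (ν := (volume : Measure (Ed d)))
    have i2 := i1.integral_prod_right' (ν := volume.restrict (Ioc (1:ℝ) β⁻¹))
    have f1 : StronglyMeasurable fun η : Ed d =>
      (β ^ (γ - d - 1) * Real.exp (‖η‖ ^ γ * (1 - β ^ (-γ)))) • ϑ' (β⁻¹ • η) := by
      refine Measurable.stronglyMeasurable ?_
      fun_prop
    exact f1.add (i2.fun_const_smul (Complex.I * (γ : ℂ)))
  refine ⟨_, hsm, ?_⟩
  have q : Measure.QuasiMeasurePreserving (fun x : Ed d => β⁻¹ • x) volume volume := by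
    refine ⟨by fun_prop, ?_⟩
    rw [Measure.map_addHaar_smul _ (by positivity)]
    exact Measure.smul_absolutelyContinuous
  filter_upwards [q.ae_eq_comp he] with η hη
  simp only [Function.comp] at hη
  unfold renormC
  rw [hη]
  congr 2
  refine integral_congr_ae (Filter.Eventually.of_forall fun t => ?_)
  refine integral_congr_ae ?_
  filter_upwards [he, (refl_mp (t • η)).quasiMeasurePreserving.ae_eq_comp he] with x hx hx2
  simp only [Function.comp] at hx2
  simp only [renormKernelC, hx, hx2]


/-- exponential weight -/
noncomputable def ew {d : ℕ} (x : Ed d) : ℝ≥0∞ := ENNReal.ofReal (Real.exp ‖x‖)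

lemma ew_meas {d : ℕ} : Measurable (ew (d := d)) := by unfold ew; fun_prop

/-- weighted norm for extended nonnegative functions -/
noncomputable def Wn {d : ℕ} (p ν : ℝ) (X : Ed d → ℝ≥0∞) : ℝ≥0∞ :=
  Nrg p ν (fun x => X x * ew x) ^ (1 / p)

lemma W_eq {d : ℕ} (hd : 2 ≤ d) {p : ℝ} (hp : 0 < p) (ν : ℝ) (g : Ed d → ℝ) :
    wLpNorm (uWeight ν) p g = Wn p ν (fun x => ‖g x‖ₑ) := by
  unfold wLpNorm Wn Nrg
  congr 1
  refine lintegral_congr_ae ?_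
  filter_upwards [ae_ne_zero hd] with x hx
  have hn : 0 < ‖x‖ := norm_pos_iff.2 hx
  rw [enorm_rpow_real hx, ew, uWeight, ← ofReal_norm, Real.norm_eq_abs, mul_assoc,
    ← ENNReal.ofReal_mul (by positivity), ← ENNReal.ofReal_mul (by positivity),
    ENNReal.ofReal_rpow_of_nonneg (by positivity) hp.le,
    Real.mul_rpow (abs_nonneg _) (by positivity)]

lemma Wn_mono {d : ℕ} {p ν : ℝ} (hp : 0 < p) {X Y : Ed d → ℝ≥0∞} (h : ∀ᵐ x, X x ≤ Y x) :
    Wn p ν X ≤ Wn p ν Y := by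
  unfold Wn Nrg
  refine ENNReal.rpow_le_rpow (lintegral_mono_ae ?_) (by positivity)
  filter_upwards [h] with x hx
  gcongr

lemma Wn_add {d : ℕ} {p ν : ℝ} (hp : 1 < p) {X Y : Ed d → ℝ≥0∞} (hX : Measurable X)
    (hY : Measurable Y) : Wn p ν (fun x => X x + Y x) ≤ Wn p ν X + Wn p ν Y := by
  unfold Wn Nrg
  have := ew_meas (d := d)
  have h := ENNReal.lintegral_Lp_add_le (μ := (volume : Measure (Ed d)))
    (f := fun x => X x * ew x * ‖x‖ₑ ^ ν) (g := fun x => Y x * ew x * ‖x‖ₑ ^ ν) (p := p)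
    (by fun_prop) (by fun_prop) hp.le
  refine le_trans (le_of_eq ?_) h
  congr 1
  refine lintegral_congr fun x => ?_
  simp only [Pi.add_apply]
  congr 1; ring

lemma Wn_const {d : ℕ} {p ν : ℝ} (hp : 0 < p) {X : Ed d → ℝ≥0∞} {c : ℝ≥0∞} (hc : c ≠ ⊤) :
    Wn p ν (fun x => c * X x) = c * Wn p ν X := by
  unfold Wn Nrg
  have : ∀ x : Ed d, (c * X x * ew x * ‖x‖ₑ ^ ν) ^ p = c ^ p * (X x * ew x * ‖x‖ₑ ^ ν) ^ p := by
    intro x; rw [← ENNReal.mul_rpow_of_nonneg _ _ hp.le]; congr 1; ring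
  simp_rw [this]
  rw [lintegral_const_mul' _ _ (ENNReal.rpow_ne_top_of_nonneg hp.le hc),
    ENNReal.mul_rpow_of_nonneg _ _ (by positivity), ← ENNReal.rpow_mul, mul_one_div_cancel hp.ne',
    ENNReal.rpow_one]

/-- linear majorant -/
noncomputable def Lop {d : ℕ} (γ β : ℝ) (X : Ed d → ℝ≥0∞) (η : Ed d) : ℝ≥0∞ :=
  ENNReal.ofReal (β ^ (γ - d - 1) * Real.exp (‖η‖ ^ γ * (1 - β ^ (-γ)))) * X (β⁻¹ • η)

/-- bilinear majorant -/
noncomputable def Kop {d : ℕ} (γ β : ℝ) (X : Ed d → ℝ≥0∞) (η : Ed d) : ℝ≥0∞ :=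
  ENNReal.ofReal γ * ∫⁻ t in Ioc (1:ℝ) β⁻¹,
    ENNReal.ofReal (t ^ (-(γ - d - 1))) * (Ek γ t η * ‖η‖ₑ * cnv X (t • η))

lemma Lop_meas {d : ℕ} (γ β : ℝ) {X : Ed d → ℝ≥0∞} (hX : Measurable X) :
    Measurable (Lop γ β X) := by
  unfold Lop; fun_prop

lemma Kop_meas {d : ℕ} (γ β : ℝ) {X : Ed d → ℝ≥0∞} (hX : Measurable X) :
    Measurable (Kop γ β X) := by
  have h2 : Measurable fun q : Ed d × ℝ => Ek γ q.2 q.1 := Ek_meas' γ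
  have h3 : Measurable fun q : Ed d × ℝ => ‖q.1‖ₑ := measurable_enorm.comp measurable_fst
  have h4 : Measurable fun q : Ed d × ℝ => cnv X (q.2 • q.1) :=
    (cnv_meas hX).comp (measurable_snd.smul measurable_fst)
  have h5 : Measurable fun q : Ed d × ℝ => ENNReal.ofReal (q.2 ^ (-(γ - d - 1))) := by fun_prop
  have hm : Measurable fun q : Ed d × ℝ => ENNReal.ofReal (q.2 ^ (-(γ - d - 1))) *
    (Ek γ q.2 q.1 * ‖q.1‖ₑ * cnv X (q.2 • q.1)) := h5.mul ((h2.mul h3).mul h4)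
  exact (hm.lintegral_prod_right' (ν := volume.restrict (Ioc 1 β⁻¹))).const_mul _

lemma Lop_bound {d : ℕ} {p ν γ β : ℝ} (hγ : 1 < γ) (hp : 1 < p) (hβ : β ∈ Ioo (0:ℝ) 1)
    {X : Ed d → ℝ≥0∞} (hX : Measurable X) :
    Wn p ν (Lop γ β X) ≤ ENNReal.ofReal (β ^ (γ - (d + 1 - (d / p + ν)))) * Wn p ν X := by
  obtain ⟨h0, h1⟩ := hβ
  have hp0 : 0 < p := by linarith
  have hi0 : 0 < β⁻¹ := by positivity
  have hi1 : 1 ≤ β⁻¹ := (one_le_inv₀ h0).2 h1.le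
  have mew := ew_meas (d := d)
  set B := ENNReal.ofReal β with hB
  have hB0 : B ≠ 0 := by simpa [hB] using h0
  have hBt : B ≠ ⊤ := by simp [hB]
  have hBi : ENNReal.ofReal β⁻¹ = B⁻¹ := by rw [ENNReal.ofReal_inv_of_pos h0]
  have key : ∀ η : Ed d, (Lop γ β X η * ew η * ‖η‖ₑ ^ ν) ^ p ≤
      B ^ ((γ - d - 1 + ν) * p) * (X (β⁻¹ • η) * ew (β⁻¹ • η) * ‖β⁻¹ • η‖ₑ ^ ν) ^ p := by
    intro η
    rw [ENNReal.rpow_mul, ← ENNReal.mul_rpow_of_nonneg _ _ hp0.le]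
    refine ENNReal.rpow_le_rpow ?_ hp0.le
    rw [enorm_smul_rpow _ hi0, hBi, ENNReal.rpow_add _ _ hB0 hBt]
    have e1 : ENNReal.ofReal (β ^ (γ - d - 1) * Real.exp (‖η‖ ^ γ * (1 - β ^ (-γ)))) ≤
        B ^ (γ - d - 1) := by
      rw [hB, ENNReal.ofReal_rpow_of_pos h0]
      refine ENNReal.ofReal_le_ofReal ?_
      have : 1 ≤ β ^ (-γ) := Real.one_le_rpow_of_pos_of_le_one_of_nonpos h0 h1.le (by linarith)
      have h3 : Real.exp (‖η‖ ^ γ * (1 - β ^ (-γ))) ≤ 1 :=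
        Real.exp_le_one_iff.2 (mul_nonpos_of_nonneg_of_nonpos (by positivity) (by linarith))
      have : 0 ≤ β ^ (γ - d - 1) := by positivity
      nlinarith
    have e2 : ew η ≤ ew (β⁻¹ • η) := by
      unfold ew
      refine ENNReal.ofReal_le_ofReal (Real.exp_le_exp.2 ?_)
      rw [norm_smul, Real.norm_of_nonneg hi0.le]
      exact le_mul_of_one_le_left (norm_nonneg _) hi1
    have e3 : B ^ ν * B⁻¹ ^ ν = 1 := by
      rw [ENNReal.inv_rpow]
      exact ENNReal.mul_inv_cancel (by simp [hB0, hBt]) (ENNReal.rpow_ne_top_of_ne_zero hB0 hBt)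
    calc Lop γ β X η * ew η * ‖η‖ₑ ^ ν
        ≤ B ^ (γ - d - 1) * X (β⁻¹ • η) * ew (β⁻¹ • η) * ‖η‖ₑ ^ ν := by
          unfold Lop; gcongr
      _ = B ^ (γ - d - 1) * X (β⁻¹ • η) * ew (β⁻¹ • η) * ‖η‖ₑ ^ ν * (B ^ ν * B⁻¹ ^ ν) := by
          rw [e3, mul_one]
      _ = _ := by ring
  unfold Wn Nrg
  calc (∫⁻ η, (Lop γ β X η * ew η * ‖η‖ₑ ^ ν) ^ p) ^ (1 / p)
      ≤ (∫⁻ η : Ed d, B ^ ((γ - d - 1 + ν) * p) *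
          (X (β⁻¹ • η) * ew (β⁻¹ • η) * ‖β⁻¹ • η‖ₑ ^ ν) ^ p) ^ (1 / p) := by
        gcongr with η; exact key η
    _ = (B ^ ((γ - d - 1 + ν) * p) * (B ^ (d:ℝ) *
        ∫⁻ η : Ed d, (X η * ew η * ‖η‖ₑ ^ ν) ^ p)) ^ (1 / p) := by
        rw [lintegral_const_mul' _ _ (ENNReal.rpow_ne_top_of_ne_zero hB0 hBt),
          lint_smul (fun x => (X x * ew x * ‖x‖ₑ ^ ν) ^ p) (by fun_prop) hi0, hBi,
          ENNReal.inv_rpow, ENNReal.rpow_neg, inv_inv]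
    _ = _ := by
        rw [← mul_assoc, ← ENNReal.rpow_add _ _ hB0 hBt, ENNReal.mul_rpow_of_nonneg _ _ (by positivity),
          ← ENNReal.rpow_mul, ← ENNReal.ofReal_rpow_of_pos h0]
        congr 2
        field_simp
        ring

lemma ew_add {d : ℕ} {t : ℝ} (ht : 1 ≤ t) (η y : Ed d) : ew η ≤ ew y * ew (t • η - y) := by
  unfold ew
  rw [← ENNReal.ofReal_mul (by positivity), ← Real.exp_add]
  refine ENNReal.ofReal_le_ofReal (Real.exp_le_exp.2 ?_)
  calc ‖η‖ ≤ t * ‖η‖ := le_mul_of_one_le_left (norm_nonneg _) ht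
    _ = ‖t • η‖ := by rw [norm_smul, Real.norm_of_nonneg (by linarith)]
    _ = ‖y + (t • η - y)‖ := by congr 1; abel
    _ ≤ _ := norm_add_le _ _

lemma cnv_ew {d : ℕ} {t : ℝ} (ht : 1 ≤ t) (X : Ed d → ℝ≥0∞) (η : Ed d) :
    cnv X (t • η) * ew η ≤ cnv (fun x => X x * ew x) (t • η) := by
  unfold cnv
  rw [← lintegral_mul_const' _ _ (by simp [ew])]
  refine lintegral_mono fun y => ?_
  calc X y * X (t • η - y) * ew η ≤ X y * X (t • η - y) * (ew y * ew (t • η - y)) := by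
        gcongr; exact ew_add ht η y
    _ = _ := by ring

lemma Kop_bound {d : ℕ} (hd : 2 ≤ d) {p ν γ β : ℝ} (hγ : 1 < γ) (hβ : β ∈ Ioo (0:ℝ) 1)
    (hp : 2 < p) (hs2 : (d:ℝ) < 2 * (d / p + ν))
    (hs : d / p + ν < d) (hm : d + 1 - (d / p + ν) < γ) :
    ∃ C : ℝ≥0∞, C ≠ ⊤ ∧ ∀ X : Ed d → ℝ≥0∞, Measurable X →
      Wn p ν (Kop γ β X) ≤ C * Wn p ν X ^ 2 := by
  obtain ⟨h0, h1⟩ := hβ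
  have hp0 : 0 < p := by linarith
  obtain ⟨C, hC, hK⟩ := K_all hd hγ ((one_lt_inv₀ h0).2 h1) hp hs2 hs hm
  set c := γ - d - 1 with hc
  set M : ℝ≥0∞ := ENNReal.ofReal γ * ENNReal.ofReal (β⁻¹ ^ |c|) with hM
  have hMt : M ≠ ⊤ := ENNReal.mul_ne_top (by simp) (by simp)
  refine ⟨M * C ^ (1 / p), ENNReal.mul_ne_top hMt
    (ENNReal.rpow_ne_top_of_nonneg (by positivity) hC), fun X hX => ?_⟩
  have mew := ew_meas (d := d)
  have hφ : Measurable fun x => X x * ew x := by fun_prop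
  have h := hK _ hφ
  have key : ∀ η, Kop γ β X η * ew η ≤ M * Kf γ β⁻¹ (cnv fun x => X x * ew x) η := by
    intro η
    unfold Kop Kf
    rw [hM, mul_assoc, mul_assoc]
    refine mul_le_mul' le_rfl ?_
    rw [← lintegral_mul_const' _ _ (by simp [ew]), ← lintegral_const_mul' _ _ (by simp)]
    refine setLIntegral_mono_ae' measurableSet_Ioc (Filter.Eventually.of_forall fun t ht => ?_)
    have ht0 : 0 < t := by linarith [ht.1]
    have e1 : t ^ (-c) ≤ β⁻¹ ^ |c| :=
      (Real.rpow_le_rpow_of_exponent_le ht.1.le (neg_le_abs c)).trans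
        (Real.rpow_le_rpow ht0.le ht.2 (abs_nonneg c))
    calc ENNReal.ofReal (t ^ (-c)) * (Ek γ t η * ‖η‖ₑ * cnv X (t • η)) * ew η
        = ENNReal.ofReal (t ^ (-c)) * (Ek γ t η * ‖η‖ₑ * (cnv X (t • η) * ew η)) := by ring
      _ ≤ _ := by
        refine mul_le_mul' (ENNReal.ofReal_le_ofReal e1) (mul_le_mul' le_rfl ?_)
        exact cnv_ew ht.1.le X η
  unfold Wn
  set N := Nrg p ν fun x => X x * ew x with hN
  calc Nrg p ν (fun x => Kop γ β X x * ew x) ^ (1 / p)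
      ≤ (M ^ p * (C * N ^ (2:ℝ))) ^ (1 / p) := by
        refine ENNReal.rpow_le_rpow ?_ (by positivity)
        refine le_trans ?_ (mul_le_mul' le_rfl h)
        rw [← lintegral_const_mul' _ _ (ENNReal.rpow_ne_top_of_nonneg hp0.le hMt)]
        refine lintegral_mono fun η => ?_
        rw [← ENNReal.mul_rpow_of_nonneg _ _ hp0.le, ← mul_assoc]
        refine ENNReal.rpow_le_rpow ?_ hp0.le
        exact mul_le_mul' (key η) le_rfl
    _ = _ := by
        clear_value M N
        have e : (1 / p) * ((2:ℕ):ℝ) = 2 * (1 / p) := by push_cast; ring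
        rw [ENNReal.mul_rpow_of_nonneg _ _ (by positivity),
          ENNReal.mul_rpow_of_nonneg _ _ (by positivity), ← ENNReal.rpow_mul M,
          mul_one_div_cancel hp0.ne', ENNReal.rpow_one, ← ENNReal.rpow_mul N,
          ← ENNReal.rpow_natCast, ← ENNReal.rpow_mul N, e]
        ring

lemma cnv_radial {d : ℕ} {X : Ed d → ℝ≥0∞} (hX : IsRadial X) : IsRadial (cnv X) := by
  intro x y h
  set R := (ℝ ∙ (x - y))ᗮ.reflection with hR
  have hxy : R x = y := Submodule.reflection_sub h
  have mp := R.measurePreserving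
  unfold cnv
  rw [← mp.lintegral_comp_emb R.toHomeomorph.measurableEmbedding (fun z => X z * X (y - z))]
  refine lintegral_congr fun z => ?_
  congr 1
  · exact hX _ _ (R.norm_map z).symm
  · refine hX _ _ ?_
    rw [← hxy, ← map_sub, R.norm_map]

lemma Lop_radial {d : ℕ} (γ β : ℝ) {X : Ed d → ℝ≥0∞} (hX : IsRadial X) :
    IsRadial (Lop γ β X) := by
  intro x y h
  unfold Lop
  rw [h, hX (β⁻¹ • x) (β⁻¹ • y) (by simp [norm_smul, h])]

lemma Kop_radial {d : ℕ} (γ β : ℝ) {X : Ed d → ℝ≥0∞} (hX : IsRadial X) :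
    IsRadial (Kop γ β X) := by
  intro x y h
  unfold Kop
  congr 1
  refine lintegral_congr fun t => ?_
  rw [Ek, Ek, ← ofReal_norm, ← ofReal_norm, h,
    cnv_radial hX (t • x) (t • y) (by simp [norm_smul, h])]

lemma renorm_le {d : ℕ} {γ β : ℝ} (hγ : 1 < γ) (hβ : β ∈ Ioo (0:ℝ) 1) {ϑ : Ed d → EdC d}
    {X : Ed d → ℝ≥0∞} (h : ∀ᵐ x, ‖ϑ x‖ₑ ≤ X x) :
    ∀ᵐ η, ‖renormC d γ β ϑ η‖ₑ ≤ Lop γ β X η + Kop γ β X η := by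
  obtain ⟨h0, h1⟩ := hβ
  have q : Measure.QuasiMeasurePreserving (fun x : Ed d => β⁻¹ • x) volume volume := by
    refine ⟨by fun_prop, ?_⟩
    rw [Measure.map_addHaar_smul _ (by positivity)]
    exact Measure.smul_absolutelyContinuous
  filter_upwards [q.ae h] with η hη
  unfold renormC
  refine (enorm_add_le _ _).trans (add_le_add ?_ ?_)
  · rw [enorm_smul, Real.enorm_of_nonneg (by positivity)]
    exact mul_le_mul' le_rfl hη
  · rw [enorm_smul]
    unfold Kop
    refine mul_le_mul' ?_ ?_
    · rw [← ofReal_norm]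
      refine ENNReal.ofReal_le_ofReal ?_
      simp [abs_of_pos (by linarith : (0:ℝ) < γ)]
    · refine (enorm_integral_le_lintegral_enorm _).trans ?_
      refine setLIntegral_mono_ae' measurableSet_Ioc (Filter.Eventually.of_forall fun t ht => ?_)
      refine (enorm_integral_le_lintegral_enorm _).trans ?_
      have ht0 : 0 < t := by linarith [ht.1]
      unfold cnv
      rw [← mul_assoc, ← lintegral_const_mul' _ _ (by
        refine ENNReal.mul_ne_top (by simp) (ENNReal.mul_ne_top ?_ enorm_ne_top)
        simp [Ek])]
      refine lintegral_mono_ae ?_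
      filter_upwards [h, (refl_mp (t • η)).quasiMeasurePreserving.ae h] with x hx hx2
      have p1 : ‖pairC η (ϑ (t • η - x))‖ₑ ≤ ‖η‖ₑ * X (t • η - x) := by
        refine le_trans ?_ (mul_le_mul' le_rfl hx2)
        rw [← ofReal_norm, ← ofReal_norm, ← ofReal_norm, ← ENNReal.ofReal_mul (norm_nonneg _)]
        exact ENNReal.ofReal_le_ofReal (pairC_bound _ _)
      have p2 : ‖lerayC η (ϑ x)‖ₑ ≤ X x := by
        refine le_trans ?_ hx
        rw [← ofReal_norm, ← ofReal_norm]
        exact ENNReal.ofReal_le_ofReal (lerayC_bound _ _)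
      unfold renormKernelC
      rw [enorm_smul, enorm_smul, Real.enorm_of_nonneg (by positivity),
        ENNReal.ofReal_mul (by positivity)]
      calc _ ≤ ENNReal.ofReal (t ^ (-(γ - d - 1))) * Ek γ t η * (‖η‖ₑ * X (t • η - x) * X x) := by
            unfold Ek; gcongr
        _ = _ := by ring


lemma arith_facts {D γ p r ν κ : ℝ} (hD : 0 < D) (hγ : 1 < γ)
    (hp : 1 < p) (hr : 1 < r)
    (h1 : 1 / r = 2 / p + (2 * ν + κ) / D - 1)
    (h2 : κ < D / r)
    (h4 : ν < D * (p - 1) / p)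
    (h8 : max 0 (D + p * ((γ - D - 1) + ν)) < D * (r - p) / r + p * (ν + κ + 1))
    (h9 : D * (r - p) / r + p * (ν + κ + 1) < γ * p * (r - 1) / r)
    (h10 : γ < γ * p * (r - 1) / r - D * (r - p) / r - p * (ν + κ + 1)) :
    2 < p ∧ D < 2 * (D / p + ν) ∧ D / p + ν < D ∧ D + 1 - (D / p + ν) < γ := by
  have hp0 : 0 < p := by linarith
  have hr0 : 0 < r := by linarith
  have hir : 0 < 1 / r := by positivity
  have e0 : D / r = 2 * (D / p) + 2 * ν + κ - D := by
    have : D / r = D * (1 / r) := by ring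
    rw [this, h1]; field_simp; ring
  have e1 : D * (r - p) / r + p * (ν + κ + 1) = p * (D + 1 - (D / p + ν)) := by
    have : D * (r - p) / r = D - p * (D / r) := by field_simp
    rw [this, e0]; ring_nf; field_simp; ring
  have e2 : γ * p * (r - 1) / r = p * (γ * (1 - 1 / r)) := by field_simp
  set m := D + 1 - (D / p + ν) with hm
  have f8 : D + p * ((γ - D - 1) + ν) = p * (γ - m) := by rw [hm]; field_simp; ring
  rw [e1, f8] at h8
  have h8a : p * (γ - m) < p * m := lt_of_le_of_lt (le_max_right _ _) h8
  have g8 : γ - m < m := lt_of_mul_lt_mul_left h8a hp0.le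
  rw [e1, e2] at h9
  have g9 : m < γ * (1 - 1 / r) := lt_of_mul_lt_mul_left h9 hp0.le
  have g10 : γ < p * (γ * (1 - 1 / r) - m) := by
    have : γ * p * (r - 1) / r - D * (r - p) / r - p * (ν + κ + 1) =
      γ * p * (r - 1) / r - (D * (r - p) / r + p * (ν + κ + 1)) := by ring
    rw [this, e1, e2] at h10; linarith
  have hlt : γ * (1 - 1 / r) < γ := by nlinarith
  have e4 : D * (p - 1) / p = D - D / p := by field_simp
  refine ⟨?_, by linarith, by linarith, by linarith⟩
  have : γ * (1 - 1 / r) - m < γ / 2 := by linarith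
  have h5 : γ < p * (γ / 2) := g10.trans (mul_lt_mul_of_pos_left this hp0)
  by_contra hcon
  nlinarith

lemma ball_convex {d : ℕ} (hd : 2 ≤ d) {p ν A : ℝ} (hp : 1 < p) (hA : 0 < A) :
    Convex ℝ {ϑ : Ed d → EdC d | MemRLBall d p ν A ϑ} := by
  rintro ϑ₁ ⟨m1, g1, hg1, r1, n1, b1⟩ ϑ₂ ⟨m2, g2, hg2, r2, n2, b2⟩ a b ha hb hab
  have hp0 : 0 < p := by linarith
  refine ⟨(m1.const_smul a).add (m2.const_smul b), fun x => a * g1 x + b * g2 x, by fun_prop,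
    ?_, ?_, ?_⟩
  · intro x y h
    simp only [r1 x y h, r2 x y h]
  · rw [W_eq hd hp0] at n1 n2 ⊢
    calc Wn p ν (fun x => ‖a * g1 x + b * g2 x‖ₑ)
        ≤ Wn p ν (fun x => ENNReal.ofReal a * ‖g1 x‖ₑ + ENNReal.ofReal b * ‖g2 x‖ₑ) := by
          refine Wn_mono hp0 (Filter.Eventually.of_forall fun x => ?_)
          refine (enorm_add_le _ _).trans (le_of_eq ?_)
          rw [enorm_mul, enorm_mul, Real.enorm_of_nonneg ha, Real.enorm_of_nonneg hb]
      _ ≤ ENNReal.ofReal a * Wn p ν (fun x => ‖g1 x‖ₑ) + ENNReal.ofReal b * Wn p ν (fun x => ‖g2 x‖ₑ) := by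
          refine (Wn_add hp (by fun_prop) (by fun_prop)).trans ?_
          rw [Wn_const hp0 (by simp), Wn_const hp0 (by simp)]
      _ ≤ ENNReal.ofReal a * ENNReal.ofReal A + ENNReal.ofReal b * ENNReal.ofReal A := by
          gcongr
      _ = ENNReal.ofReal A := by
          rw [← add_mul, ← ENNReal.ofReal_add ha hb, hab]; simp
  · filter_upwards [b1, b2] with x h1 h2
    simp only [Pi.add_apply, Pi.smul_apply]
    refine (norm_add_le _ _).trans ?_
    rw [norm_smul, norm_smul, Real.norm_of_nonneg ha, Real.norm_of_nonneg hb]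
    gcongr

lemma Wn_fin {d : ℕ} (hd : 2 ≤ d) {p ν : ℝ} (hp : 0 < p) {X : Ed d → ℝ≥0∞} (hX : Measurable X)
    (h : Wn p ν X ≠ ⊤) : ∀ᵐ x, X x ≠ ⊤ := by
  have h2 : Nrg p ν (fun x => X x * ew x) ≠ ⊤ := by
    intro h3; apply h; rw [Wn, h3, ENNReal.top_rpow_of_pos (by positivity)]
  have mew := ew_meas (d := d)
  have h3 := ae_lt_top (by fun_prop : Measurable fun x : Ed d => (X x * ew x * ‖x‖ₑ ^ ν) ^ p) h2
  filter_upwards [h3, ae_ne_zero hd] with x hx hx0 hcon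
  rw [hcon, ENNReal.top_mul (by simp [ew, Real.exp_pos]), ENNReal.top_mul (by
    have : ‖x‖ₑ ≠ 0 := by simpa using hx0
    simp [ENNReal.rpow_eq_zero_iff, this]), ENNReal.top_rpow_of_pos hp] at hx
  exact lt_irrefl _ hx

theorem renorm_invariant_bounded_convex_set
    (d : ℕ) (hd : 2 ≤ d) (γ : ℝ) (hγ : 1 < γ) (p r ν κ : ℝ)
    (hp : 1 < p) (hr : 1 < r)
    (h1 : 1 / r = 2 / p + (2 * ν + κ) / d - 1)
    (h2 : κ < d / r)
    (h3 : (d - 1) / 2 * (1 - 2 / p) < ν)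
    (h4 : ν < d * (p - 1) / p)
    (h5 : p ≤ 2 * r)
    (h6 : 0 < max ν κ)
    (h7 : (d - 1) * (1 / r - 1 / p) ≤ ν + κ)
    (h8 : max 0 (d + p * ((γ - d - 1) + ν)) < d * (r - p) / r + p * (ν + κ + 1))
    (h9 : d * (r - p) / r + p * (ν + κ + 1) < γ * p * (r - 1) / r)
    (h10 : γ < γ * p * (r - 1) / r - d * (r - p) / r - p * (ν + κ + 1))
    (h11 : r / (r - 1) < p) :
    ∀ β ∈ Set.Ioo (0 : ℝ) 1, ∃ A : ℝ, 0 < A ∧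
      Convex ℝ {ϑ : Ed d → EdC d | MemRLBall d p ν A ϑ} ∧
      ∀ ϑ : Ed d → EdC d, MemRLBall d p ν A ϑ → MemRLBall d p ν A (renormC d γ β ϑ) := by
  intro β hβ
  have hd0 : (0:ℝ) < d := by positivity
  obtain ⟨k1, k2, k3, k4⟩ := arith_facts hd0 hγ hp hr h1 h2 h4 h8 h9 h10
  obtain ⟨C, hC, hK⟩ := Kop_bound hd hγ hβ k1 k2 k3 k4
  have hp0 : 0 < p := by linarith
  set q : ℝ := β ^ (γ - (d + 1 - (d / p + ν))) with hq
  have hq0 : 0 ≤ q := by have := hβ.1; positivity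
  have hq1 : q < 1 := Real.rpow_lt_one hβ.1.le hβ.2 (by linarith)
  set c : ℝ := C.toReal + 1 with hc
  have hc0 : 0 < c := by positivity
  have hCc : C ≤ ENNReal.ofReal c := by
    rw [← ENNReal.ofReal_toReal hC]
    exact ENNReal.ofReal_le_ofReal (by rw [hc]; linarith)
  set A : ℝ := (1 - q) / c with hA
  have hA0 : 0 < A := div_pos (by linarith) hc0
  have hAA : q * A + c * A ^ 2 = A := by
    have : c * A = 1 - q := by rw [hA]; field_simp
    calc q * A + c * A ^ 2 = (q + c * A) * A := by ring
      _ = A := by rw [this]; ring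
  refine ⟨A, hA0, ball_convex hd hp hA0, ?_⟩
  rintro ϑ ⟨mϑ, g, hg, rg, ng, bg⟩
  rw [W_eq hd hp0] at ng
  set X : Ed d → ℝ≥0∞ := fun x => ‖g x‖ₑ with hX
  have mX : Measurable X := by rw [hX]; fun_prop
  have rX : IsRadial X := fun x y h => by simp only [hX, rg x y h]
  have bX : ∀ᵐ x, ‖ϑ x‖ₑ ≤ X x := by
    filter_upwards [bg] with x hx
    rw [hX, ← ofReal_norm]
    simp only
    rw [Real.enorm_of_nonneg ((norm_nonneg _).trans hx)]
    exact ENNReal.ofReal_le_ofReal hx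
  set Y : Ed d → ℝ≥0∞ := fun η => Lop γ β X η + Kop γ β X η with hY
  have mL := Lop_meas γ β mX
  have mK := Kop_meas γ β mX
  have mY : Measurable Y := mL.add mK
  have WY : Wn p ν Y ≤ ENNReal.ofReal A := by
    calc Wn p ν Y ≤ Wn p ν (Lop γ β X) + Wn p ν (Kop γ β X) := Wn_add hp mL mK
      _ ≤ ENNReal.ofReal q * Wn p ν X + C * Wn p ν X ^ 2 :=
          add_le_add (Lop_bound hγ hp hβ mX) (hK X mX)
      _ ≤ ENNReal.ofReal q * ENNReal.ofReal A + ENNReal.ofReal c * ENNReal.ofReal A ^ 2 := by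
          gcongr
      _ = ENNReal.ofReal A := by
          rw [← ENNReal.ofReal_pow hA0.le, ← ENNReal.ofReal_mul hq0, ← ENNReal.ofReal_mul hc0.le,
            ← ENNReal.ofReal_add (by positivity) (by positivity), hAA]
  have fY := Wn_fin hd hp0 mY (ne_top_of_le_ne_top ENNReal.ofReal_ne_top WY)
  refine ⟨renorm_meas hβ.1 mϑ, fun η => (Y η).toReal, mY.ennreal_toReal, ?_, ?_, ?_⟩
  · intro x y h
    simp only [hY, Lop_radial γ β rX x y h, Kop_radial γ β rX x y h]
  · rw [W_eq hd hp0]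
    refine (Wn_mono hp0 (Filter.Eventually.of_forall fun x => ?_)).trans WY
    rw [Real.enorm_of_nonneg ENNReal.toReal_nonneg]
    exact ENNReal.ofReal_toReal_le
  · filter_upwards [fY, renorm_le hγ hβ bX] with η h1 h2
    rw [← toReal_enorm]
    exact ENNReal.toReal_mono h1 h2
end

section
/- Let d ≥ 2 be an integer and let σ, γ be real numbers with σ ∈ (max{−d,−3}, 0), σ ∉ {−2, −d/2}, and γ − d − 1 ≥ σ. Then there exist k > 0 and b > 0 such that the set M = {ψ : ℝ^d → ℝ measurable : |ψ(η)| < k |η|^σ e^{−b|η|} for a.e. η ≠ 0} is invariant under the azimuthal renormalization operator R_β for every β ∈ (0,1): if ψ ∈ M then R_β[ψ](η) is defined for a.e. η and R_β[ψ] ∈ M. -/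
open MeasureTheory Set RealInnerProductSpace
open scoped ENNReal NNReal

/-- radial profile dominating the pieces of the convolution -/
noncomputable def radF (σ r s : ℝ) : ℝ := s ^ σ * ((if s ≤ r then 1 else 0) + Real.exp (-s))

lemma radF_nonneg (σ r s : ℝ) (hs : 0 ≤ s) : 0 ≤ radF σ r s := by
  unfold radF
  have := Real.exp_pos (-s)
  split_ifs <;> positivity

lemma radF_bound (d : ℕ) (hd : 2 ≤ d) (σ : ℝ) (hσ : -(d : ℝ) < σ) :
    ∃ A : ℝ, 0 < A ∧ ∀ r : ℝ, 0 < r →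
      Integrable (fun x : Ed d => radF σ r ‖x‖) ∧
        ∫ x : Ed d, radF σ r ‖x‖ ≤ A * (1 + r ^ (σ + d)) := by
  have hp : 0 < σ + d := by linarith
  have key : ∀ r : ℝ, 0 < r → ∀ y ∈ Ioi (0 : ℝ),
      (Ioc 0 r).indicator (fun y : ℝ => y ^ (σ + d - 1)) y + Real.exp (-y) * y ^ (σ + d - 1)
        = y ^ (d - 1) • radF σ r y := by
    intro r hr y hy
    have hy : 0 < y := hy
    have e : y ^ (σ + d - 1) = y ^ (d - 1) * y ^ σ := by
      rw [← Real.rpow_natCast, ← Real.rpow_add hy]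
      congr 1
      push_cast [Nat.cast_sub (show 1 ≤ d by omega)]
      ring
    simp only [indicator, mem_Ioc, hy, true_and, radF, smul_eq_mul, e]
    split_ifs <;> ring
  have hi1 : ∀ r : ℝ, 0 < r → IntegrableOn (fun y : ℝ => y ^ (σ + d - 1)) (Ioc 0 r) := by
    intro r hr
    exact (intervalIntegrable_iff_integrableOn_Ioc_of_le hr.le).mp
      (intervalIntegral.intervalIntegrable_rpow' (by linarith))
  have hi1' : ∀ r : ℝ, 0 < r → IntegrableOn
      ((Ioc 0 r).indicator (fun y : ℝ => y ^ (σ + d - 1))) (Ioi 0) := by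
    intro r hr
    exact ((integrable_indicator_iff measurableSet_Ioc).mpr (hi1 r hr)).integrableOn
  have hi2 := Real.GammaIntegral_convergent hp
  set V : ℝ := (volume : Measure (Ed d)).real (Metric.ball 0 1) with hV
  have hV0 : 0 ≤ V := measureReal_nonneg
  set G : ℝ := ∫ y in Ioi (0:ℝ), Real.exp (-y) * y ^ (σ + d - 1) with hG
  have hG0 : 0 ≤ G := setIntegral_nonneg measurableSet_Ioi (fun y hy => by
    have : (0:ℝ) < y := hy
    positivity)
  refine ⟨d * V * (G + 1 / (σ + d)) + 1, by positivity, fun r hr => ⟨?_, ?_⟩⟩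
  · have : Nonempty (Fin d) := ⟨⟨0, by omega⟩⟩
    rw [integrable_fun_norm_addHaar volume (f := radF σ r)]
    have hfr : Module.finrank ℝ (Ed d) = d := by simp
    rw [hfr]
    exact ((hi1' r hr).add hi2).congr_fun (fun y hy => key r hr y hy) measurableSet_Ioi
  · have : Nonempty (Fin d) := ⟨⟨0, by omega⟩⟩
    rw [integral_fun_norm_addHaar volume (radF σ r)]
    have hfr : Module.finrank ℝ (Ed d) = d := by simp
    rw [hfr, ← setIntegral_congr_fun measurableSet_Ioi (key r hr), integral_add (hi1' r hr) hi2,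
      setIntegral_indicator measurableSet_Ioc, ← hG, ← hV]
    have : Ioi (0:ℝ) ∩ Ioc 0 r = Ioc 0 r := by
      ext y; simp only [mem_inter_iff, mem_Ioi, mem_Ioc]; tauto
    rw [this, ← intervalIntegral.integral_of_le hr.le, integral_rpow (Or.inl (by linarith))]
    rw [show σ + d - 1 + 1 = σ + d by ring, Real.zero_rpow hp.ne', sub_zero]
    simp only [nsmul_eq_mul, smul_eq_mul]
    have hR : 0 < r ^ (σ + d) := Real.rpow_pos_of_pos hr _
    have h1 : 0 < 1 / (σ + d) := by positivity
    have h2 : 0 ≤ d * V := by positivity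
    have : r ^ (σ + d) / (σ + d) + G ≤ (G + 1 / (σ + d)) * (1 + r ^ (σ + d)) := by
      rw [div_eq_mul_one_div]
      nlinarith [mul_nonneg hG0 hR.le]
    calc (d : ℝ) * (V * (r ^ (σ + d) / (σ + d) + G))
        = d * V * (r ^ (σ + d) / (σ + d) + G) := by ring
      _ ≤ d * V * ((G + 1 / (σ + d)) * (1 + r ^ (σ + d))) := by gcongr
      _ ≤ _ := by nlinarith

lemma half_rpow (σ : ℝ) (hσ : σ < 0) {a r : ℝ} (hr : 0 < r) (h : r ≤ 2 * a) :
    a ^ σ ≤ 2 ^ (-σ) * r ^ σ := by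
  have : a ^ σ ≤ (r / 2) ^ σ := Real.rpow_le_rpow_of_nonpos (by positivity) (by linarith) hσ.le
  refine this.trans (le_of_eq ?_)
  rw [Real.div_rpow hr.le (by norm_num), Real.rpow_neg (by norm_num)]
  field_simp

lemma conv_aux (σ : ℝ) (hσ : σ < 0) {a c r : ℝ} (ha : 0 ≤ a) (hr : 0 < r)
    (h : r ≤ a + c) (hac : a ≤ c) :
    a ^ σ * Real.exp (-a) * (c ^ σ * Real.exp (-c)) ≤
      Real.exp (-r) * (2 ^ (-σ) * r ^ σ) * radF σ r a := by
  have h1 : c ^ σ ≤ 2 ^ (-σ) * r ^ σ := half_rpow σ hσ hr (by linarith)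
  have h2 : Real.exp (-a) * Real.exp (-c) ≤
      Real.exp (-r) * ((if a ≤ r then 1 else 0) + Real.exp (-a)) := by
    rw [← Real.exp_add]
    split_ifs with hh
    · have : Real.exp (-a + -c) ≤ Real.exp (-r) := Real.exp_le_exp.mpr (by linarith)
      nlinarith [Real.exp_pos (-r), Real.exp_pos (-a), mul_pos (Real.exp_pos (-r)) (Real.exp_pos (-a))]
    · rw [zero_add, ← Real.exp_add]
      exact Real.exp_le_exp.mpr (by linarith)
  calc _ = a ^ σ * (c ^ σ * (Real.exp (-a) * Real.exp (-c))) := by ring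
    _ ≤ a ^ σ * ((2 ^ (-σ) * r ^ σ) *
        (Real.exp (-r) * ((if a ≤ r then 1 else 0) + Real.exp (-a)))) := by gcongr
    _ = _ := by unfold radF; ring

lemma conv_pt {d : ℕ} (σ : ℝ) (hσ : σ < 0) (y x : Ed d) (hy : y ≠ 0) :
    ‖x‖ ^ σ * Real.exp (-‖x‖) * (‖y - x‖ ^ σ * Real.exp (-‖y - x‖)) ≤
      Real.exp (-‖y‖) * (2 ^ (-σ) * ‖y‖ ^ σ) * (radF σ ‖y‖ ‖x‖ + radF σ ‖y‖ ‖y - x‖) := by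
  have hr : 0 < ‖y‖ := norm_pos_iff.mpr hy
  have htri : ‖y‖ ≤ ‖x‖ + ‖y - x‖ := by
    simpa using norm_add_le x (y - x)
  have p1 := radF_nonneg σ ‖y‖ ‖x‖ (norm_nonneg _)
  have p2 := radF_nonneg σ ‖y‖ ‖y - x‖ (norm_nonneg _)
  have p3 : 0 < Real.exp (-‖y‖) * (2 ^ (-σ) * ‖y‖ ^ σ) := by positivity
  rcases le_total ‖x‖ ‖y - x‖ with h | h
  · refine (conv_aux σ hσ (norm_nonneg x) hr htri h).trans ?_
    gcongr; linarith
  · rw [mul_comm]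
    refine (conv_aux σ hσ (norm_nonneg (y - x)) hr (by linarith) h).trans ?_
    gcongr; linarith

lemma normA_le {d : ℕ} (hd : 2 ≤ d) (x : Ed d) : normA x ≤ ‖x‖ := by
  unfold normA
  rw [EuclideanSpace.norm_eq]
  apply Real.sqrt_le_sqrt
  have h1 : d - 2 < d := by omega
  have h2 : d - 1 < d := by omega
  simp only [azim1, azim2, h1, h2, dif_pos]
  have hne : (⟨d - 2, h1⟩ : Fin d) ≠ ⟨d - 1, h2⟩ := by
    simp only [ne_eq, Fin.mk.injEq]; omega
  have := Finset.sum_le_sum_of_subset_of_nonneg (s := {(⟨d - 2, h1⟩ : Fin d), ⟨d - 1, h2⟩})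
    (t := Finset.univ) (f := fun i => ‖x i‖ ^ 2) (Finset.subset_univ _)
    (fun i _ _ => by positivity)
  rw [Finset.sum_pair hne] at this
  simpa using this

lemma normA_nonneg {d : ℕ} (x : Ed d) : 0 ≤ normA x := Real.sqrt_nonneg _

lemma normA_sq {d : ℕ} (x : Ed d) : normA x ^ 2 = azim1 x ^ 2 + azim2 x ^ 2 :=
  Real.sq_sqrt (by positivity)

lemma abs_cosAng_le {d : ℕ} (η x : Ed d) : |cosAng η x| ≤ 1 := by
  unfold cosAng
  have h0 : 0 ≤ normA x * normA η := mul_nonneg (normA_nonneg _) (normA_nonneg _)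
  rw [abs_div, abs_of_nonneg h0]
  refine div_le_one_of_le₀ (abs_le_of_sq_le_sq ?_ h0) h0
  rw [mul_pow, normA_sq, normA_sq]
  nlinarith [sq_nonneg (azim1 x * azim2 η - azim2 x * azim1 η)]

lemma abs_sinAng_le {d : ℕ} (η x : Ed d) : |sinAng η x| ≤ 1 := by
  unfold sinAng
  have h0 : 0 ≤ normA x * normA η := mul_nonneg (normA_nonneg _) (normA_nonneg _)
  rw [abs_div, abs_of_nonneg h0]
  refine div_le_one_of_le₀ (abs_le_of_sq_le_sq ?_ h0) h0
  rw [mul_pow, normA_sq, normA_sq]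
  nlinarith [sq_nonneg (azim1 x * azim1 η + azim2 x * azim2 η)]

lemma measurable_azim1 {d : ℕ} : Measurable (azim1 : Ed d → ℝ) := by
  unfold azim1
  split_ifs <;> fun_prop

lemma measurable_azim2 {d : ℕ} : Measurable (azim2 : Ed d → ℝ) := by
  unfold azim2
  split_ifs <;> fun_prop

lemma measurable_normA {d : ℕ} : Measurable (normA : Ed d → ℝ) := by
  unfold normA
  have := measurable_azim1 (d := d)
  have := measurable_azim2 (d := d)
  fun_prop

lemma measurable_aKernel {d : ℕ} (γ : ℝ) (ψ : Ed d → ℝ) (hψ : Measurable ψ) :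
    Measurable (fun p : (Ed d × ℝ) × Ed d => aKernel d γ ψ p.1.1 p.1.2 p.2) := by
  unfold aKernel cosAng sinAng
  have h1 := measurable_azim1 (d := d)
  have h2 := measurable_azim2 (d := d)
  have h3 := measurable_normA (d := d)
  fun_prop

lemma measurable_arenorm {d : ℕ} (γ β : ℝ) (ψ : Ed d → ℝ) (hψ : Measurable ψ) :
    Measurable (arenorm d γ β ψ) := by
  have h := measurable_aKernel γ ψ hψ
  have h1 : StronglyMeasurable (fun p : Ed d × ℝ => ∫ x : Ed d, aKernel d γ ψ p.1 p.2 x) :=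
    h.stronglyMeasurable.integral_prod_right'
  have h2 : Measurable (fun η : Ed d => ∫ t in Set.Ioc (1 : ℝ) β⁻¹,
      ∫ x : Ed d, aKernel d γ ψ η t x) := (h1.integral_prod_right').measurable
  have h3 := measurable_normA (d := d)
  unfold arenorm
  fun_prop

/-- the decay factor -/
noncomputable def decE (γ a t : ℝ) : ℝ := Real.exp (a ^ γ * (1 - t ^ γ) + a * (1 - t))

lemma slice_bound {d : ℕ} (γ σ A k : ℝ) (hσ2 : σ < 0) (hk : 0 < k)
    (hσ5 : σ ≤ γ - d - 1) (hγ : 1 < γ) (hp : 0 < σ + d) (hA : 0 < A)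
    (hF : ∀ r : ℝ, 0 < r → Integrable (fun x : Ed d => radF σ r ‖x‖) ∧
        ∫ x : Ed d, radF σ r ‖x‖ ≤ A * (1 + r ^ (σ + d)))
    (ψ : Ed d → ℝ) (hψ : memM k 1 σ ψ) (η : Ed d) (hη : η ≠ 0) (t : ℝ) (ht : 1 ≤ t) :
    Integrable (aKernel d γ ψ η t) ∧
      ∫ x, ‖aKernel d γ ψ η t x‖ ≤ k ^ 2 * (2 ^ (-σ) * (4 * A)) * ‖η‖ ^ σ * Real.exp (-‖η‖)
        * (1 + (t * ‖η‖) ^ (γ - 1)) * decE γ ‖η‖ t := by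
  obtain ⟨hm, hb⟩ := hψ
  have ht0 : 0 < t := by linarith
  have hn : 0 < ‖η‖ := norm_pos_iff.mpr hη
  set y : Ed d := t • η with hy
  have hyn : ‖y‖ = t * ‖η‖ := by rw [hy, norm_smul, Real.norm_of_nonneg ht0.le]
  have hy0 : y ≠ 0 := smul_ne_zero ht0.ne' hη
  have hyp : 0 < ‖y‖ := norm_pos_iff.mpr hy0
  have : Nontrivial (Ed d) := ⟨η, 0, hη⟩
  have hb1 : ∀ᵐ x : Ed d, |ψ x| ≤ k * ‖x‖ ^ σ * Real.exp (-‖x‖) := by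
    filter_upwards [hb, Measure.ae_ne volume (0 : Ed d)] with x hx hx0
    simpa using (hx hx0).le
  have hb2 : ∀ᵐ x : Ed d, |ψ (y - x)| ≤ k * ‖y - x‖ ^ σ * Real.exp (-‖y - x‖) :=
    (Measure.measurePreserving_sub_left volume y).quasiMeasurePreserving.ae hb1
  set P : ℝ := t ^ (-(γ - d - 1)) * Real.exp (‖η‖ ^ γ * (1 - t ^ γ)) with hP
  have hP0 : 0 < P := by positivity
  set Q : ℝ := Real.exp (-‖y‖) * (2 ^ (-σ) * ‖y‖ ^ σ) with hQ
  have hQ0 : 0 < Q := by positivity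
  have hdom : ∀ᵐ x : Ed d, ‖aKernel d γ ψ η t x‖ ≤
      P * k ^ 2 * Q * (radF σ ‖y‖ ‖x‖ + radF σ ‖y‖ ‖y - x‖) := by
    filter_upwards [hb1, hb2] with x h1 h2
    rw [aKernel, ← hP, Real.norm_eq_abs, abs_mul, abs_of_pos hP0, abs_mul, abs_mul, abs_mul]
    have c1 := abs_cosAng_le η x
    have c2 := abs_sinAng_le η (t • η - x)
    have := conv_pt σ hσ2 y x hy0
    rw [← hQ] at this
    calc P * (|ψ x| * |ψ (t • η - x)| * |cosAng η x| * |sinAng η (t • η - x)|)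
        ≤ P * ((k * ‖x‖ ^ σ * Real.exp (-‖x‖)) * (k * ‖y - x‖ ^ σ * Real.exp (-‖y - x‖)) * 1 * 1) := by
          gcongr
      _ = P * k ^ 2 * (‖x‖ ^ σ * Real.exp (-‖x‖) * (‖y - x‖ ^ σ * Real.exp (-‖y - x‖))) := by ring
      _ ≤ P * k ^ 2 * (Q * (radF σ ‖y‖ ‖x‖ + radF σ ‖y‖ ‖y - x‖)) := by gcongr
      _ = _ := by ring
  obtain ⟨F1, F2⟩ := hF ‖y‖ hyp
  have F1' : Integrable (fun x : Ed d => radF σ ‖y‖ ‖y - x‖) := F1.comp_sub_left y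
  have F2' : ∫ x : Ed d, radF σ ‖y‖ ‖y - x‖ = ∫ x : Ed d, radF σ ‖y‖ ‖x‖ :=
    integral_sub_left_eq_self (fun x : Ed d => radF σ ‖y‖ ‖x‖) volume y
  have hmeas : Measurable (aKernel d γ ψ η t) :=
    (measurable_aKernel γ ψ hm).comp (measurable_prodMk_left (x := ((η, t) : Ed d × ℝ)))
  have hGi := ((F1.add F1').const_mul (P * k ^ 2 * Q))
  have hint : Integrable (aKernel d γ ψ η t) := hGi.mono' hmeas.aestronglyMeasurable hdom
  refine ⟨hint, ?_⟩
  have hpow : ‖y‖ ^ (σ + d) ≤ 1 + ‖y‖ ^ (γ - 1) := by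
    rcases le_total ‖y‖ 1 with h | h
    · have := Real.rpow_le_one hyp.le h hp.le
      have := Real.rpow_nonneg hyp.le (γ - 1)
      linarith
    · have := Real.rpow_le_rpow_of_exponent_le h (show σ + d ≤ γ - 1 by linarith)
      linarith
  have hg0 := Real.rpow_nonneg hyp.le (γ - 1)
  have hPQ : P * Q ≤ 2 ^ (-σ) * ‖η‖ ^ σ * Real.exp (-‖η‖) * decE γ ‖η‖ t := by
    have e1 : t ^ (-(γ - d - 1)) ≤ t ^ (-σ) :=
      Real.rpow_le_rpow_of_exponent_le ht (by linarith)
    have e2 : t ^ (-σ) * ‖y‖ ^ σ = ‖η‖ ^ σ := by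
      rw [hyn, Real.mul_rpow ht0.le hn.le, ← mul_assoc, ← Real.rpow_add ht0]; simp
    have e3 : Real.exp (‖η‖ ^ γ * (1 - t ^ γ)) * Real.exp (-‖y‖) =
        Real.exp (-‖η‖) * decE γ ‖η‖ t := by
      rw [decE, ← Real.exp_add, ← Real.exp_add, hyn]; congr 1; ring
    calc P * Q = t ^ (-(γ - d - 1)) * (2 ^ (-σ) * ‖y‖ ^ σ *
          (Real.exp (‖η‖ ^ γ * (1 - t ^ γ)) * Real.exp (-‖y‖))) := by rw [hP, hQ]; ring
      _ ≤ t ^ (-σ) * (2 ^ (-σ) * ‖y‖ ^ σ *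
          (Real.exp (‖η‖ ^ γ * (1 - t ^ γ)) * Real.exp (-‖y‖))) := by gcongr
      _ = 2 ^ (-σ) * (t ^ (-σ) * ‖y‖ ^ σ) *
          (Real.exp (‖η‖ ^ γ * (1 - t ^ γ)) * Real.exp (-‖y‖)) := by ring
      _ = _ := by rw [e2, e3]; ring
  calc ∫ x, ‖aKernel d γ ψ η t x‖
      ≤ ∫ x, P * k ^ 2 * Q * (radF σ ‖y‖ ‖x‖ + radF σ ‖y‖ ‖y - x‖) :=
        integral_mono_ae hint.norm hGi hdom
    _ = P * k ^ 2 * Q * (2 * ∫ x : Ed d, radF σ ‖y‖ ‖x‖) := by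
        rw [integral_const_mul, integral_add F1 F1', F2']; ring
    _ ≤ P * k ^ 2 * Q * (2 * (A * (1 + (1 + ‖y‖ ^ (γ - 1))))) := by
        gcongr
        exact F2.trans (by gcongr)
    _ ≤ P * k ^ 2 * Q * (4 * A * (1 + ‖y‖ ^ (γ - 1))) := by
        have : 2 * (A * (1 + (1 + ‖y‖ ^ (γ - 1)))) ≤ 4 * A * (1 + ‖y‖ ^ (γ - 1)) := by
          nlinarith [mul_nonneg hA.le hg0]
        gcongr
    _ = (P * Q) * (k ^ 2 * (4 * A * (1 + ‖y‖ ^ (γ - 1)))) := by ring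
    _ ≤ (2 ^ (-σ) * ‖η‖ ^ σ * Real.exp (-‖η‖) * decE γ ‖η‖ t) *
          (k ^ 2 * (4 * A * (1 + ‖y‖ ^ (γ - 1)))) := by gcongr
    _ = _ := by rw [hyn]; ring

lemma decE_hasDerivAt (γ a t : ℝ) (ha : 0 < a) (ht : 0 < t) :
    HasDerivAt (fun t => - decE γ a t) ((a ^ γ * (γ * t ^ (γ - 1)) + a) * decE γ a t) t := by
  have h1 : HasDerivAt (fun t : ℝ => t ^ γ) (γ * t ^ (γ - 1)) t :=
    Real.hasDerivAt_rpow_const (Or.inl ht.ne')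
  have h2 : HasDerivAt (fun t : ℝ => a ^ γ * (1 - t ^ γ) + a * (1 - t))
      (a ^ γ * (-(γ * t ^ (γ - 1))) + a * (-1)) t :=
    ((h1.const_sub 1).const_mul (a ^ γ)).add (((hasDerivAt_id t).const_sub 1).const_mul a)
  have h3 := h2.exp.neg
  refine h3.congr_deriv ?_
  unfold decE
  ring

theorem azimuthal_M_invariant
    (d : ℕ) (hd : 2 ≤ d) (γ σ : ℝ) (hγ : 1 < γ)
    (hσ1 : max (-(d : ℝ)) (-3) < σ) (hσ2 : σ < 0)
    (hσ3 : σ ≠ -2) (hσ4 : σ ≠ -(d : ℝ) / 2)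
    (hσ5 : σ ≤ γ - d - 1) :
    ∃ k : ℝ, 0 < k ∧ ∃ b : ℝ, 0 < b ∧
      ∀ β ∈ Set.Ioo (0 : ℝ) 1, ∀ ψ : Ed d → ℝ, memM k b σ ψ →
        (∀ᵐ η : Ed d, ARenormDefined d γ β ψ η) ∧ memM k b σ (arenorm d γ β ψ) := by
  have hσd : -(d : ℝ) < σ := lt_of_le_of_lt (le_max_left _ _) hσ1
  have hp : 0 < σ + d := by linarith
  obtain ⟨A, hA, hF⟩ := radF_bound d hd σ hσd
  set C : ℝ := 2 ^ (-σ) * (4 * A) with hC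
  have hC0 : 0 < C := by positivity
  have hγ0 : 0 < γ := by linarith
  set k : ℝ := 1 / (C * γ) with hk
  have hk0 : 0 < k := by positivity
  have hkC : k * C * γ = 1 := by rw [hk]; field_simp
  refine ⟨k, hk0, 1, one_pos, ?_⟩
  rintro β ⟨hβ0, hβ1⟩ ψ hψ
  have hT : 1 ≤ β⁻¹ := (one_le_inv₀ hβ0).mpr hβ1.le
  have hm := hψ.1
  have : Nonempty (Fin d) := ⟨⟨0, by omega⟩⟩
  -- the bound in t
  let B : Ed d → ℝ → ℝ := fun η t => k ^ 2 * C * ‖η‖ ^ σ * Real.exp (-‖η‖)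
        * (1 + (t * ‖η‖) ^ (γ - 1)) * decE γ ‖η‖ t
  have hS : ∀ η : Ed d, η ≠ 0 → ∀ t : ℝ, 1 ≤ t → Integrable (aKernel d γ ψ η t) ∧
      ∫ x, ‖aKernel d γ ψ η t x‖ ≤ B η t := fun η hη t ht =>
    slice_bound γ σ A k hσ2 hk0 hσ5 hγ hp hA hF ψ hψ η hη t ht
  have hBc : ∀ η : Ed d, Continuous (B η) := by
    intro η
    have h1 : Continuous (fun t : ℝ => (t * ‖η‖) ^ (γ - 1)) :=
      Continuous.rpow_const (by fun_prop) (fun _ => Or.inr (by linarith))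
    have h2 : Continuous (fun t : ℝ => t ^ γ) :=
      Continuous.rpow_const (by fun_prop) (fun _ => Or.inr (by linarith))
    simp only [B, decE]
    fun_prop
  have hBi : ∀ η : Ed d, IntegrableOn (B η) (Ioc 1 β⁻¹) := fun η =>
    ((hBc η).integrableOn_Icc).mono_set Ioc_subset_Icc_self
  have hdef : ∀ η : Ed d, η ≠ 0 → ARenormDefined d γ β ψ η := by
    intro η hη
    unfold ARenormDefined IntegrableOn
    have hmk : Measurable (fun q : ℝ × Ed d => aKernel d γ ψ η q.1 q.2) :=
      (measurable_aKernel γ ψ hm).comp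
        (f := fun q : ℝ × Ed d => ((η, q.1), q.2)) (by fun_prop)
    rw [Measure.volume_eq_prod, ← Measure.prod_restrict, Measure.restrict_univ,
      integrable_prod_iff hmk.aestronglyMeasurable]
    refine ⟨?_, ?_⟩
    · refine (ae_restrict_iff' measurableSet_Ioc).mpr (Filter.Eventually.of_forall fun t ht => ?_)
      exact (hS η hη t ht.1.le).1
    · refine (hBi η).mono' ?_ ?_
      · exact hmk.norm.stronglyMeasurable.integral_prod_right'.aestronglyMeasurable
      · refine (ae_restrict_iff' measurableSet_Ioc).mpr (Filter.Eventually.of_forall fun t ht => ?_)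
        rw [Real.norm_of_nonneg (integral_nonneg fun _ => norm_nonneg _)]
        exact (hS η hη t ht.1.le).2
  refine ⟨?_, measurable_arenorm γ β ψ hm, ?_⟩
  · filter_upwards [Measure.ae_ne volume (0 : Ed d)] with η hη using hdef η hη
  have hsc : ∀ᵐ η : Ed d, β⁻¹ • η ≠ 0 → |ψ (β⁻¹ • η)| <
      k * ‖β⁻¹ • η‖ ^ σ * Real.exp (-1 * ‖β⁻¹ • η‖) :=
    (Measure.quasiMeasurePreserving_smul (volume : Measure (Ed d))
      (inv_ne_zero hβ0.ne')).ae hψ.2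
  filter_upwards [hsc] with η h1 hη
  have hn : 0 < ‖η‖ := norm_pos_iff.mpr hη
  have hβi : 0 < β⁻¹ := by positivity
  specialize h1 (smul_ne_zero hβi.ne' hη)
  set a : ℝ := ‖η‖ with ha
  have hN : ‖β⁻¹ • η‖ = β⁻¹ * a := by rw [norm_smul, Real.norm_of_nonneg hβi.le]
  -- linear term
  have hlin : |β ^ (γ - d - 1) * Real.exp (a ^ γ * (1 - β ^ (-γ))) * ψ (β⁻¹ • η)| <
      k * a ^ σ * Real.exp (-a) * decE γ a β⁻¹ := by
    have hc0 : 0 < β ^ (γ - d - 1) * Real.exp (a ^ γ * (1 - β ^ (-γ))) := by positivity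
    rw [abs_mul, abs_of_pos hc0]
    rw [hN, Real.mul_rpow hβi.le hn.le] at h1
    have e0 : β ^ (γ - d - 1) ≤ β ^ σ := Real.rpow_le_rpow_of_exponent_ge hβ0 hβ1.le hσ5
    have e1 : β ^ σ * β⁻¹ ^ σ = 1 := by
      rw [← Real.mul_rpow hβ0.le hβi.le, mul_inv_cancel₀ hβ0.ne', Real.one_rpow]
    have e2 : β ^ (-γ) = β⁻¹ ^ γ := by rw [Real.rpow_neg hβ0.le, Real.inv_rpow hβ0.le]
    have e3 : Real.exp (a ^ γ * (1 - β⁻¹ ^ γ)) * Real.exp (-1 * (β⁻¹ * a)) =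
        Real.exp (-a) * decE γ a β⁻¹ := by
      rw [decE, ← Real.exp_add, ← Real.exp_add]; congr 1; ring
    calc _ < β ^ (γ - d - 1) * Real.exp (a ^ γ * (1 - β ^ (-γ))) *
          (k * (β⁻¹ ^ σ * a ^ σ) * Real.exp (-1 * (β⁻¹ * a))) := by gcongr
      _ ≤ β ^ σ * Real.exp (a ^ γ * (1 - β ^ (-γ))) *
          (k * (β⁻¹ ^ σ * a ^ σ) * Real.exp (-1 * (β⁻¹ * a))) := by gcongr
      _ = (β ^ σ * β⁻¹ ^ σ) * (k * a ^ σ) *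
          (Real.exp (a ^ γ * (1 - β⁻¹ ^ γ)) * Real.exp (-1 * (β⁻¹ * a))) := by rw [e2]; ring
      _ = _ := by rw [e1, e3]; ring
  -- nonlinear term
  have hI : |∫ t in Set.Ioc (1 : ℝ) β⁻¹, ∫ x : Ed d, aKernel d γ ψ η t x| ≤
      ∫ t in Set.Ioc (1 : ℝ) β⁻¹, B η t := by
    rw [← Real.norm_eq_abs]
    refine norm_integral_le_of_norm_le (hBi η) ?_
    refine (ae_restrict_iff' measurableSet_Ioc).mpr (Filter.Eventually.of_forall fun t ht => ?_)
    exact (norm_integral_le_integral_norm _).trans (hS η hη t ht.1.le).2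
  let D : ℝ → ℝ := fun t => (a ^ γ * (γ * t ^ (γ - 1)) + a) * decE γ a t
  have hDc : Continuous D := by
    have h1 : Continuous (fun t : ℝ => t ^ (γ - 1)) :=
      Continuous.rpow_const (by fun_prop) (fun _ => Or.inr (by linarith))
    have h2 : Continuous (fun t : ℝ => t ^ γ) :=
      Continuous.rpow_const (by fun_prop) (fun _ => Or.inr (by linarith))
    simp only [D, decE]
    fun_prop
  have hDint : ∫ t in Set.Ioc (1 : ℝ) β⁻¹, D t = 1 - decE γ a β⁻¹ := by
    rw [← intervalIntegral.integral_of_le hT,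
      intervalIntegral.integral_eq_sub_of_hasDerivAt (f := fun t => - decE γ a t)
        (fun t ht => ?_) (hDc.intervalIntegrable _ _)]
    · have : decE γ a 1 = 1 := by simp [decE]
      rw [this]; ring
    · rw [uIcc_of_le hT] at ht
      exact decE_hasDerivAt γ a t hn (by linarith [ht.1])
  have hBD : ∀ t ∈ Ioc (1:ℝ) β⁻¹, γ * a * B η t ≤ k * a ^ σ * Real.exp (-a) * D t := by
    intro t ht
    have ht0 : 0 < t := by linarith [ht.1]
    have e : a * (t * a) ^ (γ - 1) = a ^ γ * t ^ (γ - 1) := by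
      rw [Real.mul_rpow ht0.le hn.le]
      have : a ^ γ = a * a ^ (γ - 1) := by
        rw [← Real.rpow_one_add' hn.le (by linarith)]; congr 1; ring
      rw [this]; ring
    have hE : 0 < decE γ a t := Real.exp_pos _
    have hpos : 0 ≤ a ^ γ * t ^ (γ - 1) := by positivity
    calc γ * a * B η t = (k * C * γ) * (k * a ^ σ * Real.exp (-a) *
          ((a + a * (t * a) ^ (γ - 1)) * decE γ a t)) := by simp only [B, ← ha]; ring
      _ = k * a ^ σ * Real.exp (-a) * ((a + a ^ γ * t ^ (γ - 1)) * decE γ a t) := by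
          rw [hkC, e, one_mul]
      _ ≤ k * a ^ σ * Real.exp (-a) * D t := by
          simp only [D]
          have : a + a ^ γ * t ^ (γ - 1) ≤ a ^ γ * (γ * t ^ (γ - 1)) + a := by nlinarith
          gcongr
  have hnl : |γ * normA η * ∫ t in Set.Ioc (1 : ℝ) β⁻¹, ∫ x : Ed d, aKernel d γ ψ η t x| ≤
      k * a ^ σ * Real.exp (-a) * (1 - decE γ a β⁻¹) := by
    rw [abs_mul, abs_of_nonneg (mul_nonneg hγ0.le (normA_nonneg η))]
    calc _ ≤ γ * a * ∫ t in Set.Ioc (1 : ℝ) β⁻¹, B η t := by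
          have := normA_le hd η
          have := normA_nonneg η
          gcongr
      _ = ∫ t in Set.Ioc (1 : ℝ) β⁻¹, γ * a * B η t := (integral_const_mul _ _).symm
      _ ≤ ∫ t in Set.Ioc (1 : ℝ) β⁻¹, k * a ^ σ * Real.exp (-a) * D t :=
          setIntegral_mono_on ((hBi η).const_mul _)
            ((hDc.integrableOn_Icc.mono_set Ioc_subset_Icc_self).const_mul _)
            measurableSet_Ioc hBD
      _ = _ := by rw [integral_const_mul, hDint]
  rw [arenorm]
  calc _ ≤ _ := abs_add_le _ _
    _ < k * a ^ σ * Real.exp (-a) * decE γ a β⁻¹ +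
        k * a ^ σ * Real.exp (-a) * (1 - decE γ a β⁻¹) := add_lt_add_of_lt_of_le hlin hnl
    _ = _ := by rw [neg_one_mul]; ring
end
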